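/- arXiv:math/9509211 — 11 statements merged into one kernel-verified Lean document; each statement's English description precedes it below -/
import Mathlib

section
/- For every topological space X, X satisfies S1(Γ,Γ) if and only if X satisfies Sfin(Γ,Γ). -/
open Set

universe u

variable {X : Type u} [TopologicalSpace X]

/-- A γ-cover: a countably infinite family of open sets such that every point
belongs to all but finitely many members. -/
def IsGammaCover (U : Set (Set X)) : Prop :=
  U.Countable ∧ U.Infinite ∧ (∀ u ∈ U, IsOpen u) ∧ ∀ x : X, {u ∈ U | x ∉ u}.Finite

/-- A large cover: a countable family of open sets such that every point
belongs to infinitely many members. -/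
def IsLargeCover (U : Set (Set X)) : Prop :=
  U.Countable ∧ (∀ u ∈ U, IsOpen u) ∧ ∀ x : X, {u ∈ U | x ∈ u}.Infinite

/-- An ω-cover: a countable family of open sets, not containing `univ`, such
that every finite subset of the space is contained in some member. -/
def IsOmegaCover (U : Set (Set X)) : Prop :=
  U.Countable ∧ (∀ u ∈ U, IsOpen u) ∧ univ ∉ U ∧
    ∀ F : Set X, F.Finite → ∃ u ∈ U, F ⊆ u

/-- A (countable) open cover. -/
def IsCountableOpenCover (U : Set (Set X)) : Prop :=
  U.Countable ∧ (∀ u ∈ U, IsOpen u) ∧ ⋃₀ U = univ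

/-- The selection principle S1(A,B). -/
def S1 (A B : Set (Set X) → Prop) : Prop :=
  ∀ U : ℕ → Set (Set X), (∀ n, A (U n)) →
    ∃ V : ℕ → Set X, (∀ n, V n ∈ U n) ∧ B (range V)

/-- The selection principle Sfin(A,B). -/
def Sfin (A B : Set (Set X) → Prop) : Prop :=
  ∀ U : ℕ → Set (Set X), (∀ n, A (U n)) →
    ∃ V : ℕ → Set (Set X), (∀ n, (V n).Finite ∧ V n ⊆ U n) ∧ B (⋃ n, V n)

/-- The selection principle Ufin(Γ,B). -/
def Ufin (B : Set (Set X) → Prop) : Prop :=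
  ∀ U : ℕ → Set (Set X), (∀ n, IsGammaCover (U n)) →
    ∃ V : ℕ → Set (Set X), (∀ n, (V n).Finite ∧ V n ⊆ U n) ∧
      ((∃ n, ⋃₀ (V n) = univ) ∨ B (range fun n => ⋃₀ (V n)))

/-!
For the nontrivial implication, enumerate each `U n \ {univ}` injectively as `e n 0, e n 1, …` and
replace the `n`-th cover by the γ-cover of all `W n k = ⋂ j ≤ n, e j k`, so that `W m k ⊆ e n k`
whenever `n ≤ m`. A selection of finite sets `F m` from these covers whose union is a γ-cover is
infinite, hence for each `n` contains a set chosen at some stage `m ≥ n` and at no stage before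
`n`; that set lies in a member of `U n`. Each set is used for only finitely many `n`, and no
selected member is `univ`, so the selected members again form a γ-cover, in particular an
infinite family.
-/

open Filter

section Cofinite

variable {α β κ : Type*}

theorem tendsto_cofinite_of_finite_fibers {f : α → β} (hf : ∀ a, {b | f b = f a}.Finite) :
    Tendsto f cofinite cofinite := by
  refine Tendsto.cofinite_of_finite_preimage_singleton fun y => ?_
  rcases (f ⁻¹' {y}).eq_empty_or_nonempty with hempty | ⟨a, rfl⟩
  · exact (hempty ▸ finite_empty : (f ⁻¹' {y}).Finite)
  · exact hf a

theorem infinite_range_of_tendsto_cofinite [Infinite α] {f : α → β}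
    (hf : Tendsto f cofinite cofinite) : (range f).Infinite := by
  intro hfin
  obtain ⟨a, ha⟩ := (hf.eventually hfin.eventually_cofinite_notMem).exists
  exact ha (mem_range_self a)

theorem exists_tendsto_cofinite_forall_exists_ge_mem [LinearOrder κ] [LocallyFiniteOrderBot κ]
    {F : κ → Set α} (hF : ∀ n, (F n).Finite) (hinf : (⋃ n, F n).Infinite) :
    ∃ g : κ → α, Tendsto g cofinite cofinite ∧ ∀ n, ∃ m ≥ n, g n ∈ F m := by
  have hnew (n : κ) : ∃ a ∈ ⋃ m, F m, a ∉ ⋃ m < n, F m :=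
    hinf.exists_notMem_finite ((finite_Iio n).biUnion fun m _ => hF m)
  choose g hgF hgnew using hnew
  have hle {n m : κ} (h : g n ∈ F m) : n ≤ m :=
    not_lt.1 fun hmn => hgnew n (mem_biUnion hmn h)
  refine ⟨g, tendsto_cofinite_of_finite_fibers fun n => ?_, fun n => ?_⟩ <;>
    obtain ⟨m, hm⟩ := mem_iUnion.1 (hgF n)
  · exact (finite_Iic m).subset fun k (hk : g k = g n) => hle (hk ▸ hm)
  · exact ⟨m, hle hm, hm⟩

end Cofinite

section PointCofinite

variable {α ι κ : Type*} {f g : ι → Set α}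

/-- An indexed family of sets in which every point belongs to all but finitely many terms: the
covering condition of a γ-cover, for families that may repeat terms. Exceptional indices, not
exceptional sets, are counted, so a term other than `univ` is repeated only finitely often. -/
def IsPointCofinite (f : ι → Set α) : Prop :=
  ∀ x, ∀ᶠ i in cofinite, x ∈ f i

theorem IsPointCofinite.mono (hf : IsPointCofinite f) (hfg : ∀ i, f i ⊆ g i) :
    IsPointCofinite g :=
  fun x => (hf x).mono fun i hx => hfg i hx

theorem IsPointCofinite.dissipate [Preorder κ] [LocallyFiniteOrderBot κ] {e : κ → ι → Set α}
    (he : ∀ j, IsPointCofinite (e j)) (n : κ) :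
    IsPointCofinite fun i => dissipate (fun j => e j i) n := by
  intro x
  simp only [mem_dissipate]
  exact (eventually_all_finite (finite_Iic n)).2 fun j _ => he j x

theorem IsPointCofinite.tendsto_cofinite (hf : IsPointCofinite f) (hne : ∀ i, f i ≠ univ) :
    Tendsto f cofinite cofinite := by
  refine tendsto_cofinite_of_finite_fibers fun i => ?_
  obtain ⟨x, hx⟩ := (ne_univ_iff_exists_notMem (f i)).1 (hne i)
  exact (eventually_cofinite.1 (hf x)).subset fun j (hj : f j = f i) hxj => hx (hj ▸ hxj)

end PointCofinite

section GammaCover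

variable {X ι κ : Type*} [TopologicalSpace X] {U : Set (Set X)}

theorem IsPointCofinite.isGammaCover_range [Countable ι] [Infinite ι] {f : ι → Set X}
    (hf : IsPointCofinite f) (hopen : ∀ i, IsOpen (f i)) (hne : ∀ i, f i ≠ univ) :
    IsGammaCover (range f) := by
  refine ⟨countable_range f, infinite_range_of_tendsto_cofinite (hf.tendsto_cofinite hne),
    forall_mem_range.2 hopen, fun x => ?_⟩
  refine ((eventually_cofinite.1 (hf x)).image f).subset ?_
  rintro _ ⟨⟨i, rfl⟩, hx⟩
  exact mem_image_of_mem f hx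

theorem IsGammaCover.isPointCofinite (hU : IsGammaCover U) {f : ι → Set X}
    (hfU : ∀ i, f i ∈ U) (hf : Tendsto f cofinite cofinite) : IsPointCofinite f := by
  intro x
  have hfin : {u ∈ U | x ∉ u}.Finite := hU.2.2.2 x
  filter_upwards [hf.eventually hfin.eventually_cofinite_notMem] with i hi
  exact not_not.1 fun hx => hi ⟨hfU i, hx⟩

theorem IsGammaCover.exists_isPointCofinite (hU : IsGammaCover U) :
    ∃ e : ℕ → Set X, (∀ k, e k ∈ U) ∧ (∀ k, e k ≠ univ) ∧ IsPointCofinite e := by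
  have hinf : (U \ {univ}).Infinite := hU.2.1.sdiff (finite_singleton univ)
  let e : ℕ ↪ ↥(U \ {univ}) := hinf.natEmbedding
  have heU (k : ℕ) : (e k : Set X) ∈ U := (e k).2.1
  refine ⟨fun k => e k, heU, fun k => (e k).2.2, hU.isPointCofinite heU ?_⟩
  exact (Subtype.val_injective.comp e.injective).tendsto_cofinite

theorem isGammaCover_range_dissipate [Countable ι] [Infinite ι] [Preorder κ]
    [LocallyFiniteOrderBot κ] {e : κ → ι → Set X} (hopen : ∀ j i, IsOpen (e j i))
    (hne : ∀ j i, e j i ≠ univ) (he : ∀ j, IsPointCofinite (e j)) (n : κ) :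
    IsGammaCover (range fun i => dissipate (fun j => e j i) n) := by
  refine (IsPointCofinite.dissipate he n).isGammaCover_range (fun i => ?_) fun i => ?_
  · exact (finite_Iic n).isOpen_biInter fun j _ => hopen j i
  · exact fun huniv => hne n i (univ_subset_iff.1 (huniv ▸ dissipate_subset le_rfl))

end GammaCover

theorem S1.sfin {α : Type*} {A B : Set (Set α) → Prop} (h : S1 A B) : Sfin A B := by
  intro U hU
  obtain ⟨V, hVU, hV⟩ := h U hU
  refine ⟨fun n => {V n}, fun n => ⟨finite_singleton _, singleton_subset_iff.2 (hVU n)⟩, ?_⟩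
  rwa [iUnion_singleton_eq_range]

theorem Sfin.s1_isGammaCover {X : Type*} [TopologicalSpace X]
    (h : Sfin (X := X) IsGammaCover IsGammaCover) : S1 (X := X) IsGammaCover IsGammaCover := by
  intro U hU
  choose e heU hne he using fun n => (hU n).exists_isPointCofinite
  have hopen (n k : ℕ) : IsOpen (e n k) := (hU n).2.2.1 _ (heU n k)
  obtain ⟨F, hF, hcover⟩ := h _ (isGammaCover_range_dissipate hopen hne he)
  have hinf : (⋃ n, F n).Infinite := hcover.2.1
  obtain ⟨g, hg, hgF⟩ := exists_tendsto_cofinite_forall_exists_ge_mem (fun n => (hF n).1) hinf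
  have hsub (n : ℕ) : ∃ k, g n ⊆ e n k := by
    obtain ⟨m, hnm, hm⟩ := hgF n
    obtain ⟨k, hk⟩ := (hF m).2 hm
    exact ⟨k, hk ▸ dissipate_subset hnm⟩
  choose k hk using hsub
  have hgU (n : ℕ) : g n ∈ ⋃ m, F m := mem_iUnion.2 ((hgF n).imp fun _ hm => hm.2)
  have hdiag : IsPointCofinite fun n => e n (k n) := (hcover.isPointCofinite hgU hg).mono hk
  exact ⟨fun n => e n (k n), fun n => heU n (k n),
    hdiag.isGammaCover_range (fun n => hopen n (k n)) fun n => hne n (k n)⟩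

theorem stmt0 {X : Type u} [TopologicalSpace X] :
    S1 (X := X) IsGammaCover IsGammaCover ↔
      Sfin (X := X) IsGammaCover IsGammaCover :=
  ⟨S1.sfin, Sfin.s1_isGammaCover⟩
end

section
/- For every topological space X, X satisfies Sfin(Γ,Λ) if and only if X satisfies Sfin(Λ,Λ). -/
/-!
For the nontrivial direction, exhaust each large cover `U n` by finite sets `K n 0 ⊆ K n 1 ⊆ ⋯`
and let `W n k` be the open set of points lying in at least `n` members of `K n k`. Each row
`W n 0 ⊆ W n 1 ⊆ ⋯` increases to the whole space, so it is a γ-cover unless one of its terms is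
already the whole space. Hence `Sfin(Γ, Λ)` yields `f` such that every point lies in `W n (f n)` for
infinitely many `n`. Such a point lies in at least `n` selected sets for arbitrarily large `n`, so
the finite selections `K n (f n) ⊆ U n` together form a large cover.
-/

open Set

universe u

variable {X : Type u} [TopologicalSpace X]

open Filter

lemma exists_forall_rel_of_finite_subset_range {α ι : Type*} {r : α → α → Prop} [IsTrans α r]
    [Nonempty ι] {f : ι → α} (hf : Directed r f) {s : Set α} (hs : s.Finite)
    (hsf : s ⊆ range f) : ∃ i, ∀ a ∈ s, r a (f i) := by
  have := hs.to_subtype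
  choose g hg using fun a : s => hsf a.2
  obtain ⟨i, hi⟩ := hf.finite_le g
  exact ⟨i, fun a ha => by simpa only [hg] using hi ⟨a, ha⟩⟩

lemma frequently_cofinite_nonempty_of_infinite_iUnion {α ι : Type*} {s : ι → Set α}
    (hs : ∀ i, (s i).Finite) (h : (⋃ i, s i).Infinite) : ∃ᶠ i in cofinite, (s i).Nonempty := by
  refine frequently_cofinite_iff_infinite.2 fun hfin => h ?_
  exact hfin.iUnion (fun i _ => hs i) fun i hi => not_nonempty_iff_eq_empty.1 hi

section Multiplicity

/-- The set of points of multiplicity at least `n` in the family `𝓤`, i.e. the points lying in at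
least `n` members of `𝓤`. It replaces the infinite multiplicity in the definition of a large cover
by conditions on finite subfamilies. -/
def multiplicityGE {α : Type*} (𝓤 : Set (Set α)) (n : ℕ) : Set α :=
  {x | n ≤ {u ∈ 𝓤 | x ∈ u}.encard}

variable {α : Type*} {𝓤 𝓥 : Set (Set α)} {x : α}

lemma multiplicityGE_mono (h : 𝓤 ⊆ 𝓥) (n : ℕ) : multiplicityGE 𝓤 n ⊆ multiplicityGE 𝓥 n :=
  fun x (hx : n ≤ {u ∈ 𝓤 | x ∈ u}.encard) =>
    hx.trans (encard_le_encard fun _ hu => ⟨h hu.1, hu.2⟩)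

lemma multiplicityGE_antitone (𝓤 : Set (Set α)) : Antitone (multiplicityGE 𝓤) :=
  fun _ n hmn x (hx : n ≤ {u ∈ 𝓤 | x ∈ u}.encard) => (Nat.cast_le.2 hmn).trans hx

lemma mem_multiplicityGE_iff_exists_encard_eq {n : ℕ} :
    x ∈ multiplicityGE 𝓤 n ↔ ∃ 𝓕 ⊆ 𝓤, 𝓕.encard = n ∧ x ∈ ⋂₀ 𝓕 := by
  constructor
  · intro hx
    obtain ⟨𝓕, h𝓕, hcard⟩ := exists_subset_encard_eq hx
    exact ⟨𝓕, fun u hu => (h𝓕 hu).1, hcard, fun u hu => (h𝓕 hu).2⟩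
  · rintro ⟨𝓕, h𝓕, hcard, hx⟩
    exact hcard.symm.trans_le (encard_le_encard fun u hu => ⟨h𝓕 hu, hx u hu⟩)

lemma infinite_setOf_mem_iff_forall_mem_multiplicityGE :
    {u ∈ 𝓤 | x ∈ u}.Infinite ↔ ∀ n, x ∈ multiplicityGE 𝓤 n :=
  encard_eq_top_iff.symm.trans ENat.eq_top_iff_forall_ge

lemma multiplicityGE_iUnion_of_directed {ι : Type*} [Nonempty ι] {𝓚 : ι → Set (Set α)}
    (h𝓚 : Directed (· ⊆ ·) 𝓚) (n : ℕ) :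
    multiplicityGE (⋃ i, 𝓚 i) n = ⋃ i, multiplicityGE (𝓚 i) n := by
  refine Subset.antisymm (fun x hx => ?_)
    (iUnion_subset fun i => multiplicityGE_mono (subset_iUnion 𝓚 i) n)
  obtain ⟨𝓕, h𝓕, hcard, hx𝓕⟩ := mem_multiplicityGE_iff_exists_encard_eq.1 hx
  obtain ⟨_, ⟨i, rfl⟩, hi⟩ := h𝓚.directedOn_range.exists_mem_subset_of_finite_of_subset_sUnion
    (range_nonempty 𝓚) (finite_of_encard_eq_coe hcard) h𝓕
  exact mem_iUnion.2 ⟨i, mem_multiplicityGE_iff_exists_encard_eq.2 ⟨𝓕, hi, hcard, hx𝓕⟩⟩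

lemma isOpen_multiplicityGE {𝓤 : Set (Set X)} (h𝓤 : ∀ u ∈ 𝓤, IsOpen u) (n : ℕ) :
    IsOpen (multiplicityGE 𝓤 n) := by
  refine isOpen_iff_forall_mem_open.2 fun x hx => ?_
  obtain ⟨𝓕, h𝓕, hcard, hx𝓕⟩ := mem_multiplicityGE_iff_exists_encard_eq.1 hx
  exact ⟨⋂₀ 𝓕, fun y hy => mem_multiplicityGE_iff_exists_encard_eq.2 ⟨𝓕, h𝓕, hcard, hy⟩,
    (finite_of_encard_eq_coe hcard).isOpen_sInter fun u hu => h𝓤 u (h𝓕 hu), hx𝓕⟩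

end Multiplicity

lemma IsGammaCover.isLargeCover {U : Set (Set X)} (hU : IsGammaCover U) : IsLargeCover U := by
  obtain ⟨hcount, hinf, hopen, hfin⟩ := hU
  refine ⟨hcount, hopen, fun x => ?_⟩
  exact (hinf.sdiff (hfin x)).mono fun u hu => ⟨hu.1, by_contra fun hxu => hu.2 ⟨hu.1, hxu⟩⟩

lemma isGammaCover_range_of_monotone {W : ℕ → Set X} (hmono : Monotone W)
    (hopen : ∀ k, IsOpen (W k)) (hcover : ⋃ k, W k = univ) (hne : ∀ k, W k ≠ univ) :
    IsGammaCover (range W) := by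
  refine ⟨countable_range W, fun hfin => ?_, forall_mem_range.2 hopen, fun x => ?_⟩
  · obtain ⟨k, hk⟩ := exists_forall_rel_of_finite_subset_range hmono.directed_le hfin subset_rfl
    exact hne k (univ_subset_iff.1 (hcover ▸ iUnion_subset fun j => hk _ (mem_range_self j)))
  · obtain ⟨k, hk⟩ := mem_iUnion.1 (hcover ▸ mem_univ x)
    refine ((finite_Iio k).image W).subset ?_
    rintro _ ⟨⟨j, rfl⟩, hxj⟩
    exact ⟨j, not_le.1 fun hkj => hxj (hmono hkj hk), rfl⟩

lemma IsLargeCover.frequently_mem_sUnion {V : ℕ → Set (Set X)} (hfin : ∀ n, (V n).Finite)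
    (hV : IsLargeCover (⋃ n, V n)) (x : X) : ∃ᶠ n in atTop, x ∈ ⋃₀ V n := by
  have hinf : (⋃ n, {u ∈ V n | x ∈ u}).Infinite := by
    refine (hV.2.2 x).mono fun u hu => ?_
    obtain ⟨n, hn⟩ := mem_iUnion.1 hu.1
    exact mem_iUnion.2 ⟨n, hn, hu.2⟩
  rw [← Nat.cofinite_eq_atTop]
  exact frequently_cofinite_nonempty_of_infinite_iUnion (fun n => (hfin n).sep _) hinf

lemma isLargeCover_iUnion_of_frequently_mem_multiplicityGE {V : ℕ → Set (Set X)}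
    (hcount : ∀ n, (V n).Countable) (hopen : ∀ n, ∀ u ∈ V n, IsOpen u)
    (hfreq : ∀ x, ∃ᶠ n in atTop, x ∈ multiplicityGE (V n) n) : IsLargeCover (⋃ n, V n) := by
  refine ⟨countable_iUnion hcount, fun u hu => ?_, fun x => ?_⟩
  · obtain ⟨n, hn⟩ := mem_iUnion.1 hu
    exact hopen n u hn
  · refine infinite_setOf_mem_iff_forall_mem_multiplicityGE.2 fun m => ?_
    obtain ⟨n, hmn, hxn⟩ := frequently_atTop.1 (hfreq x) m
    exact multiplicityGE_mono (subset_iUnion V n) m (multiplicityGE_antitone (V n) hmn hxn)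

namespace Sfin

lemma anti_left {α : Type*} {A A' B : Set (Set α) → Prop} (hA : ∀ U, A' U → A U) (h : Sfin A B) :
    Sfin A' B :=
  fun U hU => h U fun n => hA (U n) (hU n)

variable {W : ℕ → ℕ → Set X}

lemma exists_frequently_mem_of_forall_ne_univ (h : Sfin (X := X) IsGammaCover IsLargeCover)
    (hmono : ∀ n, Monotone (W n)) (hopen : ∀ n k, IsOpen (W n k))
    (hcover : ∀ n, ⋃ k, W n k = univ) (hne : ∀ n k, W n k ≠ univ) :
    ∃ f : ℕ → ℕ, ∀ x, ∃ᶠ n in atTop, x ∈ W n (f n) := by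
  obtain ⟨V, hV, hlarge⟩ := h (fun n => range (W n)) fun n =>
    isGammaCover_range_of_monotone (hmono n) (hopen n) (hcover n) (hne n)
  choose f hf using fun n =>
    exists_forall_rel_of_finite_subset_range (hmono n).directed_le (hV n).1 (hV n).2
  exact ⟨f, fun x => (hlarge.frequently_mem_sUnion (fun n => (hV n).1) x).mono fun n hx =>
    sUnion_subset (hf n) hx⟩

lemma exists_frequently_mem (h : Sfin (X := X) IsGammaCover IsLargeCover)
    (hmono : ∀ n, Monotone (W n)) (hopen : ∀ n k, IsOpen (W n k))
    (hcover : ∀ n, ⋃ k, W n k = univ) :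
    ∃ f : ℕ → ℕ, ∀ x, ∃ᶠ n in atTop, x ∈ W n (f n) := by
  by_cases hfull : ∃ᶠ n in atTop, ∃ k, W n k = univ
  · choose! f hf using fun n (hn : ∃ k, W n k = univ) => hn
    exact ⟨f, fun x => hfull.mono fun n hn => (hf n hn).symm ▸ mem_univ x⟩
  · obtain ⟨N, hN⟩ := eventually_atTop.1 (not_frequently.1 hfull)
    obtain ⟨f, hf⟩ := h.exists_frequently_mem_of_forall_ne_univ (W := fun n => W (n + N))
      (fun n => hmono (n + N)) (fun n => hopen (n + N)) (fun n => hcover (n + N))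
      fun n k hk => hN (n + N) (Nat.le_add_left N n) ⟨k, hk⟩
    refine ⟨fun n => f (n - N), fun x => (tendsto_add_atTop_nat N).frequently ?_⟩
    simpa only [Nat.add_sub_cancel] using hf x

lemma isLargeCover_of_isGammaCover (h : Sfin (X := X) IsGammaCover IsLargeCover) :
    Sfin (X := X) IsLargeCover IsLargeCover := by
  intro U hU
  let K n : (U n).FiniteExhaustion := (hU n).1.finiteExhaustion
  have hKU n k : K n k ⊆ U n := (subset_iUnion (K n) k).trans_eq (K n).iUnion_eq
  have hKopen n k : ∀ u ∈ K n k, IsOpen u := fun u hu => (hU n).2.1 u (hKU n k hu)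
  have hKmono n : Monotone (K n) := OrderHomClass.mono (K n)
  obtain ⟨f, hf⟩ : ∃ f : ℕ → ℕ, ∀ x, ∃ᶠ n in atTop, x ∈ multiplicityGE (K n (f n)) n := by
    refine h.exists_frequently_mem (W := fun n k => multiplicityGE (K n k) n)
      (fun n k l hkl => multiplicityGE_mono (hKmono n hkl) n)
      (fun n k => isOpen_multiplicityGE (hKopen n k) n) fun n => ?_
    rw [← multiplicityGE_iUnion_of_directed (hKmono n).directed_le, (K n).iUnion_eq]
    exact eq_univ_of_forall fun x =>
      infinite_setOf_mem_iff_forall_mem_multiplicityGE.1 ((hU n).2.2 x) n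
  exact ⟨fun n => K n (f n), fun n => ⟨(K n).finite (f n), hKU n (f n)⟩,
    isLargeCover_iUnion_of_frequently_mem_multiplicityGE
      (fun n => ((K n).finite (f n)).countable) (fun n => hKopen n (f n)) hf⟩

end Sfin

theorem stmt1 {X : Type u} [TopologicalSpace X] :
    Sfin (X := X) IsGammaCover IsLargeCover ↔
      Sfin (X := X) IsLargeCover IsLargeCover :=
  ⟨Sfin.isLargeCover_of_isGammaCover, Sfin.anti_left fun _ => IsGammaCover.isLargeCover⟩
end

section
/- Let X be a compact topological space and let k be a positive integer. Every ω-cover of X contains a finite subfamily V such that every k-element subset of X is contained in some member of V (i.e., V is a k-cover of X). -/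
/-!
A subset of `K` with at most `k` elements is, unless empty, the range of a point of `K ^ k`, and it
is contained in `u` exactly when that point lies in `u ^ k`. So a nonempty family `V` is a `k`-cover
of `K` exactly when the powers `u ^ k`, `u ∈ V`, cover `K ^ k`. If `K` is compact, then so is
`K ^ k`, and a finite subcover by open powers provides a finite `k`-cover.
-/

open Set

universe u

variable {X : Type u} [TopologicalSpace X]

/-- A family `V` of sets is a `k`-cover of the set `K` if every subset of `K` with at most `k`
elements is contained in some member of `V`; a `k`-cover of the whole space is the case `K = univ`.
The subsets are required to be finite because `Set.ncard` takes the value `0` on infinite sets. -/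
def IsKCoverOn {α : Type*} (k : ℕ) (K : Set α) (V : Set (Set α)) : Prop :=
  ∀ F ⊆ K, F.Finite → F.ncard ≤ k → ∃ u ∈ V, F ⊆ u

theorem IsKCoverOn.nonempty {α : Type*} {k : ℕ} {K : Set α} {V : Set (Set α)}
    (hV : IsKCoverOn k K V) : V.Nonempty := by
  obtain ⟨u, hu, -⟩ := hV ∅ (empty_subset K) finite_empty (by simp)
  exact ⟨u, hu⟩

theorem IsOmegaCover.isKCoverOn {U : Set (Set X)} (hU : IsOmegaCover U) (k : ℕ) (K : Set X) :
    IsKCoverOn k K U :=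
  fun F _ hF _ ↦ hU.2.2.2 F hF

theorem exists_range_eq_of_ncard_le {α ι : Type*} [Fintype ι] {s : Set α} (hs : s.Finite)
    (hne : s.Nonempty) (hcard : s.ncard ≤ Fintype.card ι) : ∃ f : ι → α, range f = s := by
  have : Fintype s := hs.fintype
  have : Nonempty s := hne.to_subtype
  have hembed : Nonempty (s ↪ ι) :=
    Function.Embedding.nonempty_of_card_le (by rwa [← Nat.card_eq_fintype_card])
  obtain ⟨g, hg⟩ : ∃ g : ι → s, g.Surjective :=
    Function.exists_surjective_iff.2 ⟨inferInstance, hembed⟩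
  exact ⟨(↑) ∘ g, by rw [hg.range_comp, Subtype.range_coe]⟩

theorem isKCoverOn_iff_pi_subset_biUnion {α : Type*} {k : ℕ} {K : Set α} {V : Set (Set α)} :
    IsKCoverOn k K V ↔
      V.Nonempty ∧ univ.pi (fun _ : Fin k ↦ K) ⊆ ⋃ u ∈ V, univ.pi fun _ : Fin k ↦ u := by
  simp only [subset_def (s := univ.pi _), mem_iUnion₂, mem_univ_pi, ← range_subset_iff, exists_prop]
  refine ⟨fun hV ↦ ⟨hV.nonempty, fun f hf ↦ hV _ hf (finite_range f) ?_⟩, ?_⟩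
  · simpa [Set.ncard] using Finite.card_range_le f
  · rintro ⟨⟨u, hu⟩, hV⟩ F hFK hF hcard
    obtain rfl | hne := F.eq_empty_or_nonempty
    · exact ⟨u, hu, empty_subset u⟩
    · obtain ⟨f, rfl⟩ := exists_range_eq_of_ncard_le (ι := Fin k) hF hne (by simpa using hcard)
      exact hV f hFK

theorem stmt2_general {k : ℕ} {K : Set X} {U : Set (Set X)} (hK : IsCompact K)
    (hopen : ∀ u ∈ U, IsOpen u) (hU : IsKCoverOn k K U) :
    ∃ V ⊆ U, V.Finite ∧ IsKCoverOn k K V := by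
  obtain ⟨⟨u₀, hu₀⟩, hcover⟩ := isKCoverOn_iff_pi_subset_biUnion.1 hU
  have hpow : IsCompact (univ.pi fun _ : Fin k ↦ K) := isCompact_univ_pi fun _ ↦ hK
  obtain ⟨V, hVU, hVfin, hV⟩ := hpow.elim_finite_subcover_image
    (fun u hu ↦ isOpen_set_pi finite_univ fun _ _ ↦ hopen u hu) hcover
  refine ⟨insert u₀ V, insert_subset hu₀ hVU, hVfin.insert u₀, ?_⟩
  exact isKCoverOn_iff_pi_subset_biUnion.2
    ⟨insert_nonempty u₀ V, hV.trans (biUnion_subset_biUnion_left (subset_insert u₀ V))⟩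

theorem stmt2 {X : Type u} [TopologicalSpace X] [CompactSpace X]
    (k : ℕ) (hk : 0 < k) (U : Set (Set X)) (hU : IsOmegaCover U) :
    ∃ V ⊆ U, V.Finite ∧ ∀ F : Set X, F.Finite → F.ncard ≤ k → ∃ u ∈ V, F ⊆ u := by
  simpa [IsKCoverOn] using stmt2_general isCompact_univ hU.2.1 (hU.isKCoverOn k univ)
end

section
/- The Cantor space 2^ℕ (with the product topology) does not satisfy S1(Γ,Λ): there is a sequence (U_n)_{n∈ℕ} of γ-covers of 2^ℕ such that for every choice of U_n ∈ U_n, the family {U_n : n ∈ ℕ} is not even a cover of 2^ℕ. -/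
open Set

universe u

variable {X : Type u} [TopologicalSpace X]

/-
Identify `2^ℕ` with `(2^ℕ)^ℕ` and, in the `n`-th coordinate, cover `2^ℕ` by the complements of
countably infinitely many points. Every point lies outside at most one member, so this is a γ-cover.
Choosing a member for every `n` amounts to choosing a forbidden value for every coordinate, and the
point that has exactly the forbidden values as its coordinates escapes every chosen set.
-/

theorem IsLargeCover.sUnion_eq_univ {U : Set (Set X)} (hU : IsLargeCover U) : ⋃₀ U = univ :=
  sUnion_eq_univ_iff.2 fun x => (hU.2.2 x).nonempty

theorem not_s1_isLargeCover {A : Set (Set X) → Prop} {U : ℕ → Set (Set X)} (hU : ∀ n, A (U n))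
    (hV : ∀ V : ℕ → Set X, (∀ n, V n ∈ U n) → ⋃ n, V n ≠ univ) : ¬ S1 A IsLargeCover := by
  intro h
  obtain ⟨V, hVU, hVlarge⟩ := h U hU
  exact hV V hVU hVlarge.sUnion_eq_univ

theorem isGammaCover_image_compl_singleton [T1Space X] {S : Set X} (hS : S.Countable)
    (hSinf : S.Infinite) : IsGammaCover ((fun y => {y}ᶜ) '' S) := by
  refine ⟨hS.image _, hSinf.image (compl_injective.comp singleton_injective).injOn, ?_, fun x => ?_⟩
  · rintro _ ⟨y, -, rfl⟩
    exact isOpen_compl_singleton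
  · refine (finite_singleton {x}ᶜ).subset ?_
    rintro _ ⟨⟨y, -, rfl⟩, hxy⟩
    rw [notMem_compl_iff, mem_singleton_iff] at hxy
    rw [hxy, mem_singleton_iff]

theorem exists_isGammaCover_compl_singleton (X : Type*) [TopologicalSpace X] [T1Space X]
    [Infinite X] : ∃ U : Set (Set X), IsGammaCover U ∧ ∀ u ∈ U, ∃ y, u = {y}ᶜ := by
  let e := Infinite.natEmbedding X
  refine ⟨_, isGammaCover_image_compl_singleton (countable_range e)
    (infinite_range_of_injective e.injective), ?_⟩
  rintro _ ⟨y, -, rfl⟩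
  exact ⟨y, rfl⟩

theorem IsGammaCover.preimage {Y : Type*} [TopologicalSpace Y] {U : Set (Set Y)}
    (hU : IsGammaCover U) {f : X → Y} (hf : Continuous f) (hfsurj : Function.Surjective f) :
    IsGammaCover ((f ⁻¹' ·) '' U) := by
  obtain ⟨hcountable, hinfinite, hopen, hfinite⟩ := hU
  refine ⟨hcountable.image _, hinfinite.image hfsurj.preimage_injective.injOn, ?_, fun x => ?_⟩
  · rintro _ ⟨u, hu, rfl⟩
    exact (hopen u hu).preimage hf
  · refine ((hfinite (f x)).image (f ⁻¹' ·)).subset ?_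
    rintro _ ⟨⟨u, hu, rfl⟩, hxu⟩
    exact ⟨u, ⟨hu, hxu⟩, rfl⟩

theorem iUnion_preimage_compl_singleton_ne_univ {Z ι : Type*} {Y : ι → Type*} {f : Z → ∀ i, Y i}
    (hf : Function.Surjective f) (y : ∀ i, Y i) : ⋃ i, (f · i) ⁻¹' {y i}ᶜ ≠ univ := by
  obtain ⟨z, rfl⟩ := hf y
  exact (ne_univ_iff_exists_notMem _).2 ⟨z, by simp⟩

theorem exists_isGammaCover_forall_iUnion_ne_univ {Y : ℕ → Type*} [∀ n, TopologicalSpace (Y n)]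
    [∀ n, T1Space (Y n)] [∀ n, Infinite (Y n)] {f : X → ∀ n, Y n} (hf : Continuous f)
    (hfsurj : Function.Surjective f) :
    ∃ U : ℕ → Set (Set X), (∀ n, IsGammaCover (U n)) ∧
      ∀ V : ℕ → Set X, (∀ n, V n ∈ U n) → (⋃ n, V n) ≠ univ := by
  choose W hW hWcompl using fun n => exists_isGammaCover_compl_singleton (Y n)
  refine ⟨fun n => ((f · n) ⁻¹' ·) '' W n, fun n => ?_, fun V hV => ?_⟩
  · exact (hW n).preimage ((continuous_apply n).comp hf) ((Function.surjective_eval n).comp hfsurj)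
  · have hforbidden : ∀ n, ∃ y, V n = (f · n) ⁻¹' {y}ᶜ := by
      intro n
      obtain ⟨w, hw, hwV⟩ := hV n
      obtain ⟨y, rfl⟩ := hWcompl n w hw
      exact ⟨y, hwV.symm⟩
    choose y hy using hforbidden
    rw [iUnion_congr hy]
    exact iUnion_preimage_compl_singleton_ne_univ hfsurj y

theorem stmt4_general {Y : ℕ → Type*} [∀ n, TopologicalSpace (Y n)] [∀ n, T1Space (Y n)]
    [∀ n, Infinite (Y n)] {f : X → ∀ n, Y n} (hf : Continuous f) (hfsurj : Function.Surjective f) :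
    ¬ S1 (X := X) IsGammaCover IsLargeCover ∧
      ∃ U : ℕ → Set (Set X), (∀ n, IsGammaCover (U n)) ∧
        ∀ V : ℕ → Set X, (∀ n, V n ∈ U n) → (⋃ n, V n) ≠ univ := by
  obtain ⟨U, hU, hV⟩ := exists_isGammaCover_forall_iUnion_ne_univ hf hfsurj
  exact ⟨not_s1_isLargeCover hU hV, U, hU, hV⟩

theorem stmt4 :
    ¬ S1 (X := ℕ → Bool) IsGammaCover IsLargeCover ∧
      ∃ U : ℕ → Set (Set (ℕ → Bool)), (∀ n, IsGammaCover (U n)) ∧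
        ∀ V : ℕ → Set (ℕ → Bool), (∀ n, V n ∈ U n) → (⋃ n, V n) ≠ univ :=
  stmt4_general cantorSpaceHomeomorphNatToCantorSpace.continuous
    cantorSpaceHomeomorphNatToCantorSpace.surjective
end

section
/- If X ⊆ ℝ is an uncountable Fσ set (a countable union of sets closed in ℝ), then X with the subspace topology does not satisfy S1(Γ,Γ). -/
open Set

universe u

variable {X : Type u} [TopologicalSpace X]

/-!
Reading a point of the Cantor space as `x : ℕ × ℕ → Bool`, let `F n k` be the closed set of those
`x` whose row `n` is the `k`-th term of a fixed sequence of distinct points. For fixed `n` the sets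
`F n k` are pairwise disjoint, so their complements form a γ-cover. A choice of one set `F n (k n)`
for each `n` always has a common point, and the corresponding complements all miss it, so they are
not even a cover. Compactness transports the sets `F n k` along a continuous injection into any
Hausdorff space, and the perfect set theorem provides such an injection into every uncountable
Borel subset of a Polish space.
-/

open scoped Function

theorem S1.mono_right {Y : Type*} {A B B' : Set (Set Y) → Prop} (h : S1 A B)
    (hB : ∀ U, B U → B' U) : S1 A B' := fun U hU =>
  let ⟨V, hVU, hV⟩ := h U hU
  ⟨V, hVU, hB _ hV⟩

theorem IsGammaCover.isCountableOpenCover {U : Set (Set X)} (hU : IsGammaCover U) :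
    IsCountableOpenCover U := by
  obtain ⟨hcount, hinf, hopen, hfin⟩ := hU
  refine ⟨hcount, hopen, eq_univ_of_forall fun x => ?_⟩
  obtain ⟨u, huU, hu⟩ := hinf.exists_notMem_finite (hfin x)
  exact ⟨u, huU, by_contra fun hxu => hu ⟨huU, hxu⟩⟩

theorem isGammaCover_range_compl {ι : Type*} [Countable ι] [Infinite ι] {F : ι → Set X}
    (hclosed : ∀ i, IsClosed (F i)) (hne : ∀ i, (F i).Nonempty)
    (hdisj : Pairwise (Disjoint on F)) : IsGammaCover (range fun i => (F i)ᶜ) := by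
  have hinj : Function.Injective fun i => (F i)ᶜ :=
    compl_injective.comp <| Function.injective_iff_pairwise_ne.2 <|
      hdisj.mono fun i _ hij => hij.ne (hne i).ne_empty
  refine ⟨countable_range _, infinite_range_of_injective hinj, ?_, fun x => ?_⟩
  · rintro _ ⟨i, rfl⟩
    exact (hclosed i).isOpen_compl
  · refine Set.Subsingleton.finite ?_
    rintro _ ⟨⟨i, rfl⟩, hi⟩ _ ⟨⟨j, rfl⟩, hj⟩
    have hij : i = j :=
      hdisj.eq (not_disjoint_iff.2 ⟨x, notMem_compl_iff.1 hi, notMem_compl_iff.1 hj⟩)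
    rw [hij]

/-- An array of closed sets whose rows `F n` are pairwise disjoint families and in which every
choice of one set from each row has a common point. Such an array is the obstruction to
`S1 IsGammaCover IsCountableOpenCover` used here. -/
structure IsIndependentArray (F : ℕ → ℕ → Set X) : Prop where
  isClosed : ∀ n k, IsClosed (F n k)
  pairwise_disjoint : ∀ n, Pairwise (Disjoint on F n)
  nonempty_iInter : ∀ k : ℕ → ℕ, (⋂ n, F n (k n)).Nonempty

namespace IsIndependentArray

variable {F : ℕ → ℕ → Set X}

theorem nonempty (hF : IsIndependentArray F) (n k : ℕ) : (F n k).Nonempty :=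
  (hF.nonempty_iInter fun _ => k).mono (iInter_subset _ n)

theorem image {Y : Type*} [TopologicalSpace Y] {f : X → Y} (hF : IsIndependentArray F)
    (hclosed : IsClosedMap f) (hinj : Function.Injective f) :
    IsIndependentArray fun n k => f '' F n k where
  isClosed n k := hclosed _ (hF.isClosed n k)
  pairwise_disjoint n _ _ hkl := (disjoint_image_iff hinj).2 (hF.pairwise_disjoint n hkl)
  nonempty_iInter k := ((hF.nonempty_iInter k).image f).mono (image_iInter_subset _ f)

theorem not_s1 (hF : IsIndependentArray F) :
    ¬ S1 (X := X) IsGammaCover IsCountableOpenCover := by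
  intro hS1
  obtain ⟨V, hV, -, -, hcover⟩ := hS1 (fun n => range fun k => (F n k)ᶜ) fun n =>
    isGammaCover_range_compl (hF.isClosed n) (hF.nonempty n) (hF.pairwise_disjoint n)
  choose k hk using hV
  obtain ⟨x, hx⟩ := hF.nonempty_iInter k
  obtain ⟨_, ⟨n, rfl⟩, hxV⟩ := sUnion_eq_univ_iff.1 hcover x
  rw [← hk n] at hxV
  exact hxV (mem_iInter.1 hx n)

end IsIndependentArray

/-- The `n`-th row of a point of the Cantor space, read as a point of `ℕ × ℕ → Bool` through the
pairing function. -/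
def cantorRow (n : ℕ) (x : ℕ → Bool) : ℕ → Bool := fun j => x (Nat.pair n j)

theorem continuous_cantorRow (n : ℕ) : Continuous (cantorRow n) :=
  continuous_pi fun _ => continuous_apply _

theorem exists_forall_cantorRow_eq (y : ℕ → ℕ → Bool) : ∃ x, ∀ n, cantorRow n x = y n :=
  ⟨fun m => y m.unpair.1 m.unpair.2, fun n => by ext j; simp [cantorRow]⟩

theorem isIndependentArray_preimage_cantorRow {y : ℕ → ℕ → Bool} (hy : Function.Injective y) :
    IsIndependentArray fun n k => cantorRow n ⁻¹' {y k} where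
  isClosed n _ := isClosed_singleton.preimage (continuous_cantorRow n)
  pairwise_disjoint n _ _ hkl := (disjoint_singleton.2 (hy.ne hkl)).preimage (cantorRow n)
  nonempty_iInter k :=
    let ⟨x, hx⟩ := exists_forall_cantorRow_eq fun n => y (k n)
    ⟨x, mem_iInter.2 hx⟩

theorem not_s1_of_continuous_injective_cantor [T2Space X] {f : (ℕ → Bool) → X}
    (hf : Continuous f) (hinj : Function.Injective f) :
    ¬ S1 (X := X) IsGammaCover IsCountableOpenCover :=
  let y := Infinite.natEmbedding (ℕ → Bool)
  ((isIndependentArray_preimage_cantorRow y.injective).image hf.isClosedMap hinj).not_s1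

theorem exists_nat_bool_injection_of_measurableSet_of_not_countable {α : Type*}
    [TopologicalSpace α] [PolishSpace α] [MeasurableSpace α] [BorelSpace α] {s : Set α}
    (hs : MeasurableSet s) (hunc : ¬ s.Countable) :
    ∃ f : (ℕ → Bool) → α, range f ⊆ s ∧ Continuous f ∧ Function.Injective f := by
  -- A finer Polish topology in which `s` is closed reduces this to the perfect set theorem.
  obtain ⟨t, ht, _, hclosed, -⟩ := hs.isClopenable
  obtain ⟨f, hrange, hf, hinj⟩ :=
    @IsClosed.exists_nat_bool_injection_of_not_countable α t _ s hclosed hunc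
  exact ⟨f, hrange, continuous_le_rng ht hf, hinj⟩

theorem stmt5_general {α : Type*} [TopologicalSpace α] [PolishSpace α] [MeasurableSpace α]
    [BorelSpace α] {s : Set α} (hs : MeasurableSet s) (hunc : ¬ s.Countable) :
    ¬ S1 (X := ↥s) IsGammaCover IsCountableOpenCover := by
  obtain ⟨f, hrange, hf, hinj⟩ :=
    exists_nat_bool_injection_of_measurableSet_of_not_countable hs hunc
  have hfs : ∀ x, f x ∈ s := fun x => hrange (mem_range_self x)
  exact not_s1_of_continuous_injective_cantor (hf.subtype_mk hfs) (hinj.codRestrict hfs)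

theorem stmt5 (X : Set ℝ) (hunc : ¬ X.Countable)
    (hFsigma : ∃ C : ℕ → Set ℝ, (∀ n, IsClosed (C n)) ∧ X = ⋃ n, C n) :
    ¬ S1 (X := ↥X) IsGammaCover IsGammaCover := by
  obtain ⟨C, hC, rfl⟩ := hFsigma
  intro hS1
  have hmeas : MeasurableSet (⋃ n, C n) := .iUnion fun n => (hC n).measurableSet
  exact stmt5_general hmeas hunc (hS1.mono_right fun _ => IsGammaCover.isCountableOpenCover)
end

section
/- Let X ⊆ ℝ be a set such that for every Borel measurable function Ψ from X (with its subspace topology and Borel σ-algebra) to ℕ^ℕ, the image Ψ[X] is bounded with respect to eventual domination, i.e., there exists g ∈ ℕ^ℕ such that every f ∈ Ψ[X] satisfies f(n) ≤ g(n) for all but finitely many n. Then X satisfies S1(Γ,Γ). -/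
open Set

universe u

variable {X : Type u} [TopologicalSpace X]

/-! For a point `x` and injective sequences `e n` in the γ-covers `Uₙ`, let `Ψ x n` be an index from
which on all the sets `e n k` contain `x`. Such a `Ψ` can be chosen Borel, so by assumption a single
`g` eventually dominates every `Ψ x`; hence any choice of sets `e n (c n)` with `g ≤ c` contains
each point for almost all `n`. The tails `{e n k : k ≥ g n}` are infinite, so the chosen sets can
moreover be made pairwise distinct, which keeps the selected family infinite. -/

open Filter Function

section Selection

variable {ι α : Type*}

-- Hall's theorem applies after shrinking `s i` to a set of `rank i + 1` elements, for an injective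
-- `rank : ι → ℕ`: a finite set of indices with largest rank `r` has at most `r + 1` elements.
theorem exists_injective_forall_mem_of_infinite [Countable ι] {s : ι → Set α}
    (hs : ∀ i, (s i).Infinite) : ∃ f : ι → α, Injective f ∧ ∀ i, f i ∈ s i := by
  classical
  obtain ⟨rank, rank_injective⟩ := exists_injective_nat ι
  choose t t_subset card_t using fun i => (hs i).exists_subset_card_eq (rank i + 1)
  have hall : ∀ A : Finset ι, A.card ≤ (A.biUnion t).card := by
    intro A
    obtain rfl | hA := A.eq_empty_or_nonempty
    · exact Nat.zero_le _
    obtain ⟨m, hm, rank_le⟩ := A.exists_max_image rank hA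
    calc A.card ≤ (Finset.range (rank m + 1)).card :=
          Finset.card_le_card_of_injOn rank
            (fun i hi => Finset.mem_range.2 (Nat.lt_succ_of_le (rank_le i hi)))
            rank_injective.injOn
      _ = (t m).card := by rw [Finset.card_range, card_t]
      _ ≤ (A.biUnion t).card := Finset.card_le_card (Finset.subset_biUnion_of_mem t hm)
  obtain ⟨f, f_injective, f_mem⟩ :=
    (Finset.all_card_le_biUnion_card_iff_exists_injective t).1 hall
  exact ⟨f, f_injective, fun i => t_subset i (f_mem i)⟩

theorem exists_forall_le_injective_diagonal [Countable ι] {e : ι → ℕ → α}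
    (he : ∀ i, Injective (e i)) (g : ι → ℕ) :
    ∃ c : ι → ℕ, (∀ i, g i ≤ c i) ∧ Injective fun i => e i (c i) := by
  obtain ⟨f, f_injective, f_mem⟩ := exists_injective_forall_mem_of_infinite
    fun i => (Set.Ici_infinite (g i)).image (he i).injOn
  choose c le_c e_c using f_mem
  exact ⟨c, le_c, by simpa only [e_c] using f_injective⟩

end Selection

section Measurable

variable {α : Type*} [MeasurableSpace α]

theorem exists_measurable_forall_le_mem {e : ℕ → Set α} (he : ∀ k, MeasurableSet (e k))
    (hmem : ∀ x, ∀ᶠ k in atTop, x ∈ e k) :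
    ∃ t : α → ℕ, Measurable t ∧ ∀ x k, t x ≤ k → x ∈ e k := by
  classical
  have exists_index : ∀ x, ∃ m, ∀ k ≥ m, x ∈ e k := fun x => eventually_atTop.1 (hmem x)
  refine ⟨fun x => Nat.find (exists_index x), measurable_find exists_index fun m => ?_,
    fun x => Nat.find_spec (exists_index x)⟩
  simp only [ofPred_forall, ofPred_mem_eq]
  exact .iInter fun k => .iInter fun _ => he k

theorem exists_forall_le_eventually_mem
    (h : ∀ Ψ : α → ℕ → ℕ, Measurable Ψ → ∃ g : ℕ → ℕ, ∀ x, ∀ᶠ n in atTop, Ψ x n ≤ g n)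
    {e : ℕ → ℕ → Set α} (he : ∀ n k, MeasurableSet (e n k))
    (hmem : ∀ n x, ∀ᶠ k in atTop, x ∈ e n k) :
    ∃ g : ℕ → ℕ, ∀ c : ℕ → ℕ, (∀ n, g n ≤ c n) → ∀ x, ∀ᶠ n in atTop, x ∈ e n (c n) := by
  choose t t_measurable mem_of_t_le using
    fun n => exists_measurable_forall_le_mem (he n) (hmem n)
  obtain ⟨g, t_le_g⟩ := h (fun x n => t n x) (measurable_pi_lambda _ t_measurable)
  exact ⟨g, fun c g_le_c x => (t_le_g x).mono fun n hn =>
    mem_of_t_le n x (c n) (hn.trans (g_le_c n))⟩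

end Measurable

namespace IsGammaCover

variable {ι : Type*}

theorem isOpen {U : Set (Set X)} (hU : IsGammaCover U) {u : Set X} (hu : u ∈ U) : IsOpen u :=
  hU.2.2.1 u hu

theorem exists_injective {U : Set (Set X)} (hU : IsGammaCover U) :
    ∃ e : ℕ → Set X, Injective e ∧ ∀ k, e k ∈ U :=
  ⟨fun k => hU.2.1.natEmbedding U k,
    Subtype.val_injective.comp (hU.2.1.natEmbedding U).injective,
    fun k => (hU.2.1.natEmbedding U k).2⟩

theorem eventually_mem {U : Set (Set X)} (hU : IsGammaCover U) {e : ι → Set X}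
    (he : Injective e) (heU : ∀ i, e i ∈ U) (x : X) : ∀ᶠ i in cofinite, x ∈ e i :=
  ((hU.2.2.2 x).preimage he.injOn).subset fun i hi => ⟨heU i, hi⟩

theorem range_of_injective [Countable ι] [Infinite ι] {V : ι → Set X} (hV : Injective V)
    (hopen : ∀ i, IsOpen (V i)) (hmem : ∀ x, ∀ᶠ i in cofinite, x ∈ V i) :
    IsGammaCover (range V) := by
  refine ⟨countable_range V, infinite_range_of_injective hV, forall_mem_range.2 hopen,
    fun x => ((hmem x).image V).subset ?_⟩
  rintro _ ⟨⟨i, rfl⟩, hx⟩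
  exact mem_image_of_mem V hx

end IsGammaCover

theorem stmt7_general [MeasurableSpace X] [OpensMeasurableSpace X]
    (h : ∀ Ψ : X → ℕ → ℕ, Measurable Ψ → ∃ g : ℕ → ℕ, ∀ x, ∀ᶠ n in atTop, Ψ x n ≤ g n) :
    S1 (X := X) IsGammaCover IsGammaCover := by
  intro U hU
  choose e e_injective e_mem using fun n => (hU n).exists_injective
  have e_open : ∀ n k, IsOpen (e n k) := fun n k => (hU n).isOpen (e_mem n k)
  have eventually_mem_e : ∀ n x, ∀ᶠ k in atTop, x ∈ e n k := fun n x =>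
    Nat.cofinite_eq_atTop ▸ (hU n).eventually_mem (e_injective n) (e_mem n) x
  obtain ⟨g, hg⟩ :=
    exists_forall_le_eventually_mem h (fun n k => (e_open n k).measurableSet) eventually_mem_e
  obtain ⟨c, g_le_c, c_injective⟩ := exists_forall_le_injective_diagonal e_injective g
  refine ⟨fun n => e n (c n), fun n => e_mem n (c n),
    .range_of_injective c_injective (fun n => e_open n (c n)) fun x => ?_⟩
  exact Nat.cofinite_eq_atTop ▸ hg c g_le_c x

theorem stmt7 (X : Set ℝ)
    (h : ∀ Ψ : ↥X → (ℕ → ℕ), Measurable Ψ →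
      ∃ g : ℕ → ℕ, ∀ x : ↥X, ∀ᶠ n in Filter.atTop, Ψ x n ≤ g n) :
    S1 (X := ↥X) IsGammaCover IsGammaCover :=
  stmt7_general h
end

section
/- If a topological space X does not satisfy S1(Γ,Ω), then there exists a family D ⊆ ℕ^ℕ with cardinality at most max(|X|, ℵ₀) that is dominating: for every g ∈ ℕ^ℕ there is f ∈ D with g(n) ≤ f(n) for all n. -/
open Set

universe u

variable {X : Type u} [TopologicalSpace X]

/-!
Discard `univ` from each `U n` and enumerate infinitely many of the remaining members as
`e n 0, e n 1, …`; every point `x` then lies in `e n k` for all `k ≥ m n x`. A choice `g` of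
indices yields an ω-cover `{e n (g n) : n ∈ ℕ}` as soon as each finite `F` satisfies
`max_{x ∈ F} m n x ≤ g n` for some `n`. If no choice works, then the functions
`n ↦ max_{x ∈ F} m n x`, one for each finite set `F`, are dominating, that is, cofinal in `ℕ → ℕ`
with the pointwise order.
-/

open Filter

theorem exists_seq_mem_eventually_mem {α : Type*} {U : Set (Set α)} (hinf : U.Infinite)
    (hfin : ∀ x, {u ∈ U | x ∉ u}.Finite) :
    ∃ e : ℕ → Set α, (∀ k, e k ∈ U) ∧ ∀ x, ∀ᶠ k in atTop, x ∈ e k := by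
  let e : ℕ ↪ U := hinf.natEmbedding
  have hinj : Function.Injective fun k => (e k : Set α) :=
    Subtype.val_injective.comp e.injective
  refine ⟨fun k => e k, fun k => (e k).2, fun x => ?_⟩
  rw [← Nat.cofinite_eq_atTop]
  filter_upwards [hinj.tendsto_cofinite.eventually (hfin x).eventually_cofinite_notMem] with k hk
  exact not_not.1 fun hx => hk ⟨(e k).2, hx⟩

theorem IsGammaCover.exists_seq_ne_univ_eventually_mem {U : Set (Set X)} (hU : IsGammaCover U) :
    ∃ e : ℕ → Set X, (∀ k, e k ∈ U \ {univ}) ∧ ∀ x, ∃ m, ∀ k ≥ m, x ∈ e k := by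
  obtain ⟨-, hinf, -, hfin⟩ := hU
  simpa only [eventually_atTop] using
    exists_seq_mem_eventually_mem (hinf.sdiff (finite_singleton univ))
      fun x => (hfin x).subset fun _ hu => ⟨hu.1.1, hu.2⟩

theorem isOmegaCover_range {ι : Type*} [Countable ι] {V : ι → Set X} (hopen : ∀ i, IsOpen (V i))
    (hne : ∀ i, V i ≠ univ) (hfin : ∀ F : Finset X, ∃ i, ↑F ⊆ V i) :
    IsOmegaCover (range V) := by
  refine ⟨countable_range V, forall_mem_range.2 hopen, fun ⟨i, hi⟩ => hne i hi, fun F hF => ?_⟩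
  lift F to Finset X using hF
  exact exists_range_iff.2 (hfin F)

theorem exists_forall_finset_exists_forall_le_of_not_isCofinal {α ι β : Type*} [LinearOrder β]
    [OrderBot β] {m : ι → α → β}
    (hm : ¬ IsCofinal (range fun (F : Finset α) i => F.sup (m i))) :
    ∃ g : ι → β, ∀ F : Finset α, ∃ i, ∀ x ∈ F, m i x ≤ g i := by
  obtain ⟨g, hg⟩ : ∃ g : ι → β, ∀ F : Finset α, ¬ g ≤ fun i => F.sup (m i) := by
    simpa only [IsCofinal, exists_range_iff, not_forall, not_exists] using hm
  refine ⟨g, fun F => ?_⟩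
  obtain ⟨i, hi⟩ : ∃ i, F.sup (m i) < g i := by
    simpa only [Pi.le_def, not_forall, not_le] using hg F
  exact ⟨i, fun x hx => (Finset.le_sup hx).trans hi.le⟩

theorem s1_isGammaCover_isOmegaCover_of_forall_not_isCofinal
    (h : ∀ f : Finset X → ℕ → ℕ, ¬ IsCofinal (range f)) :
    S1 (X := X) IsGammaCover IsOmegaCover := by
  intro U hU
  choose e he m hm using fun n => (hU n).exists_seq_ne_univ_eventually_mem
  obtain ⟨g, hg⟩ :=
    exists_forall_finset_exists_forall_le_of_not_isCofinal (h fun F n => F.sup (m n))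
  have hopen : ∀ n, IsOpen (e n (g n)) := fun n => (hU n).2.2.1 _ (he n (g n)).1
  have hfin : ∀ F : Finset X, ∃ n, ↑F ⊆ e n (g n) := fun F =>
    (hg F).imp fun n hn x hx => hm n x (g n) (hn x hx)
  exact ⟨fun n => e n (g n), fun n => (he n (g n)).1,
    isOmegaCover_range hopen (fun n => (he n (g n)).2) hfin⟩

section Cardinality

open Cardinal

universe v

theorem mk_finset_le_max (α : Type u) : #(Finset α) ≤ max #α ℵ₀ := by
  classical
  calc #(Finset α) ≤ #(List α) := mk_le_of_surjective List.toFinset_surjective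
    _ ≤ max ℵ₀ #α := mk_list_le_max α
    _ = max #α ℵ₀ := max_comm _ _

theorem lift_mk_range_finset_le_max {α : Type u} {β : Type v} (f : Finset α → β) :
    lift.{u} #(range f) ≤ max (lift.{v} #α) ℵ₀ :=
  calc lift.{u} #(range f) ≤ lift.{v} #(Finset α) := mk_range_le_lift
    _ ≤ lift.{v} (max #α ℵ₀) := lift_le.2 (mk_finset_le_max α)
    _ = max (lift.{v} #α) ℵ₀ := by rw [lift_max, lift_aleph0]

end Cardinality

theorem stmt14 {X : Type u} [TopologicalSpace X]
    (h : ¬ S1 (X := X) IsGammaCover IsOmegaCover) :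
    ∃ D : Set (ℕ → ℕ),
      Cardinal.lift.{u} (Cardinal.mk D) ≤
        max (Cardinal.lift.{0} (Cardinal.mk X)) Cardinal.aleph0 ∧
      ∀ g : ℕ → ℕ, ∃ f ∈ D, ∀ n, g n ≤ f n := by
  obtain ⟨f, hf⟩ : ∃ f : Finset X → ℕ → ℕ, IsCofinal (range f) := by
    by_contra! hcof
    exact h (s1_isGammaCover_isOmegaCover_of_forall_not_isCofinal hcof)
  exact ⟨range f, lift_mk_range_finset_le_max f, hf⟩
end

section
/- If a topological space X does not satisfy S1(Ω,Ω), then the Baire space ℕ^ℕ can be written as the union of a family of closed nowhere dense subsets of ℕ^ℕ of cardinality at most max(|X|, ℵ₀). -/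
open Set

universe u

variable {X : Type u} [TopologicalSpace X]

/-!
Enumerate each cover of a sequence `(U n)` witnessing the failure of S1(Ω,Ω), so that selections
become points of `ℕ → ℕ`. For a finite `F ⊆ X`, the selections none of whose members contains `F`
form a product of subsets of the discrete space `ℕ`. Such a product is closed, and it is nowhere
dense because infinitely many of its factors (here all, `U n` being an ω-cover) are proper. No
selection being an ω-cover means precisely that these products, indexed by the finite subsets of
`X`, cover `ℕ → ℕ`.
-/

theorem interior_univ_pi_eq_empty {ι : Type*} {A : ι → Type*} [∀ i, TopologicalSpace (A i)]
    {s : ∀ i, Set (A i)} (hs : {i | s i ≠ univ}.Infinite) : interior (univ.pi s) = ∅ := by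
  classical
  refine eq_empty_of_forall_notMem fun f hf => ?_
  rw [mem_interior_iff_mem_nhds, nhds_pi, Filter.mem_pi] at hf
  obtain ⟨I, hI, t, ht, hts⟩ := hf
  obtain ⟨i, hi, hiI⟩ := hs.exists_notMem_finite hI
  obtain ⟨a, ha⟩ := (ne_univ_iff_exists_notMem _).1 hi
  have hmem : Function.update f i a ∈ I.pi t := fun j hj => by
    rw [Function.update_of_ne (ne_of_mem_of_not_mem hj hiI)]
    exact mem_of_mem_nhds (ht j)
  exact ha (by simpa using hts hmem i (mem_univ i))

open Cardinal in
theorem mk_finset_le_max_aleph0 (α : Type*) : #(Finset α) ≤ max #α ℵ₀ := by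
  cases finite_or_infinite α
  · exact le_max_of_le_right mk_le_aleph0
  · exact (mk_finset_of_infinite α).le.trans (le_max_left _ _)

section Selections

variable {ι κ α : Type*}

/-- The selections from the indexed families `{U i k | k : κ}`, encoded by their index functions
`f : ι → κ`, none of whose members `U i (f i)` contains `F`. It is stated as a product so that its
topological properties can be read off from the factors. -/
def selectionsOmitting (U : ι → κ → Set α) (F : Set α) : Set (ι → κ) :=
  univ.pi fun i => {k | ¬F ⊆ U i k}

theorem mem_selectionsOmitting {U : ι → κ → Set α} {F : Set α} {f : ι → κ} :
    f ∈ selectionsOmitting U F ↔ ∀ i, ¬F ⊆ U i (f i) :=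
  mem_univ_pi

variable [TopologicalSpace κ] [DiscreteTopology κ]

theorem isClosed_selectionsOmitting (U : ι → κ → Set α) (F : Set α) :
    IsClosed (selectionsOmitting U F) :=
  isClosed_set_pi fun _ _ => isClosed_discrete _

theorem isNowhereDense_selectionsOmitting {U : ι → κ → Set α} {F : Set α}
    (hF : {i | ∃ k, F ⊆ U i k}.Infinite) : IsNowhereDense (selectionsOmitting U F) := by
  rw [(isClosed_selectionsOmitting U F).isNowhereDense_iff]
  refine interior_univ_pi_eq_empty (hF.mono ?_)
  rintro i ⟨k, hk⟩
  exact (ne_univ_iff_exists_notMem _).2 ⟨k, not_not_intro hk⟩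

end Selections

theorem IsOmegaCover.exists_eq_range {U : Set (Set X)} (hU : IsOmegaCover U) :
    ∃ e : ℕ → Set X, U = range e := by
  obtain ⟨hcount, -, -, hfin⟩ := hU
  obtain ⟨u, hu, -⟩ := hfin ∅ finite_empty
  exact hcount.exists_eq_range ⟨u, hu⟩

theorem isOmegaCover_range_iff {ι : Type*} [Countable ι] {V : ι → Set X}
    (hopen : ∀ i, IsOpen (V i)) (hproper : ∀ i, V i ≠ univ) :
    IsOmegaCover (range V) ↔ ∀ F : Finset X, ∃ i, ↑F ⊆ V i := by
  constructor
  · rintro ⟨-, -, -, hfin⟩ F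
    exact exists_range_iff.1 (hfin F F.finite_toSet)
  · intro hfin
    refine ⟨countable_range V, forall_mem_range.2 hopen, fun ⟨i, hi⟩ => hproper i hi,
      fun F hF => exists_range_iff.2 ?_⟩
    simpa only [hF.coe_toFinset] using hfin hF.toFinset

theorem exists_indexed_covers_of_not_S1 (h : ¬S1 (X := X) IsOmegaCover IsOmegaCover) :
    ∃ U : ℕ → ℕ → Set X, (∀ (F : Finset X) n, ∃ k, ↑F ⊆ U n k) ∧
      ∀ f : ℕ → ℕ, ∃ F : Finset X, ∀ n, ¬↑F ⊆ U n (f n) := by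
  simp only [S1, not_forall, not_exists, not_and] at h
  obtain ⟨C, hC, hsel⟩ := h
  choose U hU using fun n => (hC n).exists_eq_range
  refine ⟨U, fun F n => ?_, fun f => ?_⟩
  · have hcover := (hC n).2.2.2 F F.finite_toSet
    rwa [hU n, exists_range_iff] at hcover
  · have hf : ∀ n, U n (f n) ∈ C n := fun n => hU n ▸ mem_range_self (f n)
    have hopen : ∀ n, IsOpen (U n (f n)) := fun n => (hC n).2.1 _ (hf n)
    have hproper : ∀ n, U n (f n) ≠ univ := fun n => ne_of_mem_of_not_mem (hf n) (hC n).2.2.1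
    simpa only [isOmegaCover_range_iff hopen hproper, not_forall, not_exists] using hsel _ hf

theorem stmt15 {X : Type u} [TopologicalSpace X]
    (h : ¬ S1 (X := X) IsOmegaCover IsOmegaCover) :
    ∃ K : Set (Set (ℕ → ℕ)),
      Cardinal.lift.{u} (Cardinal.mk K) ≤
        max (Cardinal.lift.{0} (Cardinal.mk X)) Cardinal.aleph0 ∧
      (∀ k ∈ K, IsClosed k ∧ IsNowhereDense k) ∧ ⋃₀ K = univ := by
  obtain ⟨U, hcover, homit⟩ := exists_indexed_covers_of_not_S1 h
  refine ⟨range fun F : Finset X => selectionsOmitting U F, ?_, ?_, ?_⟩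
  · refine Cardinal.mk_range_le_lift.trans ?_
    simpa only [Cardinal.lift_uzero] using mk_finset_le_max_aleph0 X
  · rintro _ ⟨F, rfl⟩
    exact ⟨isClosed_selectionsOmitting U F,
      isNowhereDense_selectionsOmitting (infinite_univ.mono fun n _ => hcover F n)⟩
  · refine sUnion_eq_univ_iff.2 fun f => ?_
    obtain ⟨F, hF⟩ := homit f
    exact ⟨_, mem_range_self F, mem_selectionsOmitting.2 hF⟩
end

section
/- Identify infinite subsets of ℕ with their characteristic functions, giving the set [ℕ]^∞ of infinite subsets of ℕ the subspace topology from the Cantor space 2^ℕ. A set X ⊆ ℝ satisfies Split(Λ,Λ) with respect to clopen covers (every large cover of X consisting of sets clopen in X can be partitioned into two disjoint subfamilies each of which is a large cover of X) if and only if for every continuous f : X → [ℕ]^∞ the image f[X] is not a reaping family. -/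
open Set

universe u

variable {X : Type u} [TopologicalSpace X]

/- Call a sequence of clopen sets `U n` point-infinite if every point lies in `U n` for infinitely
many `n`. Such sequences correspond to continuous maps `x ↦ {n | x ∈ U n}` into `[ℕ]^∞`, and the
image of the map is not reaping exactly when one set of indices splits all the sets
`{n | x ∈ U n}`. So the theorem compares splitting sequences with splitting countable families, and
the two differ only when the sequence has repetitions. If the map has countable image, that image is
not reaping anyway. Otherwise its image in the Cantor space is infinite, which yields infinitely
many pairwise disjoint nonempty clopen sets in `X`; replacing each `U n` by its symmetric difference
with one of them makes the sequence injective, while every point sees only finitely many changes. -/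

/-- The set `s` splits the set `a`: both pieces of `a` cut out by `s` are infinite. A family is
reaping when no single `s` splits all its members. -/
def Splits {α : Type*} (s a : Set α) : Prop :=
  (a \ s).Infinite ∧ (a ∩ s).Infinite

/-- The space `[ℕ]^∞` of infinite subsets of `ℕ`, encoded by characteristic functions so that it
carries the subspace topology from the Cantor space. -/
abbrev InfiniteSubsets : Type :=
  {g : ℕ → Bool // {n : ℕ | g n = true}.Infinite}

/-- Reaping families, as subsets of `[ℕ]^∞`; `y ⊆* x` is expressed by finiteness of `y \ x`, and
`y ⊆* ℕ \ x` by finiteness of `y ∩ x`. -/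
def IsReaping (R : Set InfiniteSubsets) : Prop :=
  ∀ x : Set ℕ, x.Infinite → ∃ y ∈ R,
    ({n : ℕ | (y : ℕ → Bool) n = true} \ x).Finite ∨
    ({n : ℕ | (y : ℕ → Bool) n = true} ∩ x).Finite

/-- The family `U` can be partitioned into two large covers; this is the conclusion of the principle
`Split(Λ,Λ)` for a single cover. -/
def IsLargeSplittable (U : Set (Set X)) : Prop :=
  ∃ V₀ V₁ : Set (Set X), V₀ ∪ V₁ = U ∧ Disjoint V₀ V₁ ∧ IsLargeCover V₀ ∧ IsLargeCover V₁

variable (X) in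
/-- The principle `Split(Λ,Λ)` restricted to clopen covers. -/
def ClopenLargeSplit : Prop :=
  ∀ U : Set (Set X), U.Countable → (∀ u ∈ U, IsClopen u) →
    (∀ x : X, {u ∈ U | x ∈ u}.Infinite) → IsLargeSplittable U

variable (X) in
/-- The analogue of `Split(Λ,Λ)` for clopen covers indexed by `ℕ`, where a set may be repeated and
the indices are partitioned instead of the sets. -/
def ClopenSeqSplit : Prop :=
  ∀ U : ℕ → Set X, (∀ n, IsClopen (U n)) → (∀ x : X, {n | x ∈ U n}.Infinite) →
    ∃ s : Set ℕ, ∀ x : X, Splits s {n | x ∈ U n}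

theorem Splits.congr {α : Type*} {s a b : Set α} (ha : Splits s a)
    (hab : ∀ᶠ i in Filter.cofinite, (i ∈ a ↔ i ∈ b)) : Splits s b := by
  simp only [Splits, ← Filter.frequently_cofinite_mem_iff_infinite] at ha ⊢
  exact ⟨(Filter.frequently_congr (hab.mono fun i hi => and_congr_left' hi)).1 ha.1,
    (Filter.frequently_congr (hab.mono fun i hi => and_congr_left' hi)).1 ha.2⟩

theorem exists_injective_forall_mem {ι β : Type*} [Countable ι] {S : ι → Set β}
    (hS : ∀ i, (S i).Infinite) : ∃ w : ι → β, Function.Injective w ∧ ∀ i, w i ∈ S i := by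
  classical
  obtain ⟨e, he⟩ := exists_injective_nat ι
  choose t htS htcard using fun i => (hS i).exists_subset_card_eq (e i + 1)
  have hall (s : Finset ι) : s.card ≤ (s.biUnion t).card := by
    rcases s.eq_empty_or_nonempty with rfl | hs
    · simp
    obtain ⟨m, hms, hm⟩ := s.exists_max_image e hs
    have hsub : s.image e ⊆ Finset.range (e m + 1) := by
      simpa [Finset.image_subset_iff, Nat.lt_succ_iff] using hm
    calc s.card = (s.image e).card := (Finset.card_image_of_injective s he).symm
      _ ≤ (Finset.range (e m + 1)).card := Finset.card_le_card hsub
      _ = (t m).card := by rw [Finset.card_range, htcard]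
      _ ≤ (s.biUnion t).card := Finset.card_le_card (Finset.subset_biUnion_of_mem t hms)
  obtain ⟨w, hw, hwt⟩ := (Finset.all_card_le_biUnion_card_iff_exists_injective t).1 hall
  exact ⟨w, hw, fun i => htS i (hwt i)⟩

theorem exists_splits_of_countable {ι α : Type*} [Countable ι] {a : ι → Set α}
    (ha : ∀ i, (a i).Infinite) : ∃ s : Set α, ∀ i, Splits s (a i) := by
  obtain ⟨w, hw, hwa⟩ :=
    exists_injective_forall_mem (S := fun p : ι × Bool × ℕ => a p.1) fun p => ha p.1
  have hinj (i : ι) (b : Bool) : Function.Injective fun k => w (i, b, k) := fun k l hkl => by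
    simpa using hw hkl
  refine ⟨range fun p : ι × ℕ => w (p.1, true, p.2), fun i => ⟨?_, ?_⟩⟩
  · refine infinite_of_injective_forall_mem (hinj i false) fun k => ⟨hwa (i, false, k), ?_⟩
    rintro ⟨p, hp⟩
    simpa using hw hp
  · exact infinite_of_injective_forall_mem (hinj i true) fun k => ⟨hwa (i, true, k), (i, k), rfl⟩

theorem not_isReaping_iff_exists_splits {R : Set InfiniteSubsets} :
    ¬ IsReaping R ↔ ∃ s : Set ℕ, ∀ y ∈ R, Splits s {n | (y : ℕ → Bool) n = true} := by
  simp only [IsReaping, Splits]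
  push Not
  refine ⟨fun ⟨s, _, hs⟩ => ⟨s, hs⟩, fun ⟨s, hs⟩ => ?_⟩
  rcases R.eq_empty_or_nonempty with rfl | ⟨y, hy⟩
  · exact ⟨univ, infinite_univ, by simp⟩
  · exact ⟨s, (hs y hy).2.mono inter_subset_right, hs⟩

theorem continuous_pi_boolIndicator {ι : Type*} {U : ι → Set X} (hU : ∀ i, IsClopen (U i)) :
    Continuous fun x i => (U i).boolIndicator x :=
  continuous_pi fun i => (continuous_boolIndicator_iff_isClopen _).2 (hU i)

theorem clopenSeqSplit_iff_forall_not_isReaping :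
    ClopenSeqSplit X ↔ ∀ f : X → InfiniteSubsets, Continuous f → ¬ IsReaping (range f) := by
  simp only [not_isReaping_iff_exists_splits, forall_mem_range]
  constructor
  · intro h f hf
    refine h (fun n => {x | (f x : ℕ → Bool) n = true}) (fun n => ?_) fun x => (f x).2
    exact (isClopen_discrete {true}).preimage
      ((continuous_apply n).comp (continuous_subtype_val.comp hf))
  · intro h U hU hinf
    simp only [mem_iff_boolIndicator] at hinf ⊢
    exact h (fun x => ⟨fun n => (U n).boolIndicator x, hinf x⟩)
      ((continuous_pi_boolIndicator hU).subtype_mk _)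

theorem infinite_sep_image_iff {ι β : Type*} {W : ι → Set β} (hW : Function.Injective W)
    (s : Set ι) (x : β) : {u ∈ W '' s | x ∈ u}.Infinite ↔ {i ∈ s | x ∈ W i}.Infinite := by
  have himage : {u ∈ W '' s | x ∈ u} = W '' {i ∈ s | x ∈ W i} :=
    (image_inter_preimage W s {u | x ∈ u}).symm
  rw [himage, infinite_image_iff hW.injOn]

theorem infinite_sep_range_iff {ι β : Type*} {W : ι → Set β} (hW : Function.Injective W) (x : β) :
    {u ∈ range W | x ∈ u}.Infinite ↔ {i | x ∈ W i}.Infinite := by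
  simpa only [image_univ, mem_univ, true_and] using infinite_sep_image_iff hW univ x

theorem isLargeCover_image_iff {ι : Type*} [Countable ι] {W : ι → Set X}
    (hW : Function.Injective W) (hopen : ∀ i, IsOpen (W i)) (s : Set ι) :
    IsLargeCover (W '' s) ↔ ∀ x, {i ∈ s | x ∈ W i}.Infinite := by
  simp only [IsLargeCover, infinite_sep_image_iff hW, s.to_countable.image W, forall_mem_image,
    hopen, implies_true, true_and]

theorem isLargeSplittable_range_iff {ι : Type*} [Countable ι] {W : ι → Set X}
    (hW : Function.Injective W) (hopen : ∀ i, IsOpen (W i)) :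
    IsLargeSplittable (range W) ↔ ∃ s : Set ι, ∀ x, Splits s {i | x ∈ W i} := by
  have himages (s : Set ι) :
      IsLargeCover (W '' s) ∧ IsLargeCover (W '' sᶜ) ↔ ∀ x, Splits s {i | x ∈ W i} := by
    simp only [isLargeCover_image_iff hW hopen, ← forall_and, Splits]
    refine forall_congr' fun x => and_comm.trans (and_congr ?_ ?_)
    · rw [sdiff_eq, inter_comm]; rfl
    · rw [inter_comm]; rfl
  simp only [← himages]
  constructor
  · rintro ⟨V₀, V₁, hunion, hdisj, h₀, h₁⟩
    have hV₀ : W '' (W ⁻¹' V₀) = V₀ := image_preimage_eq_of_subset (hunion ▸ subset_union_left)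
    have hV₁ : W '' (W ⁻¹' V₀)ᶜ = V₁ := by
      rw [image_compl_preimage, ← hunion, union_sdiff_left, hdisj.sdiff_eq_right]
    exact ⟨W ⁻¹' V₀, by rwa [hV₀], by rwa [hV₁]⟩
  · rintro ⟨s, hs, hsc⟩
    refine ⟨W '' s, W '' sᶜ, ?_, (disjoint_image_iff hW).2 disjoint_compl_right, hs, hsc⟩
    rw [← image_union, union_compl_self, image_univ]

theorem ClopenSeqSplit.clopenLargeSplit (h : ClopenSeqSplit X) : ClopenLargeSplit X := by
  intro U hcount hclopen hlarge
  rcases isEmpty_or_nonempty X with hX | ⟨⟨x⟩⟩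
  · exact ⟨U, ∅, union_empty U, disjoint_empty U,
      ⟨hcount, fun u hu => (hclopen u hu).isOpen, hX.elim⟩, countable_empty, by simp, hX.elim⟩
  have hinf : U.Infinite := (hlarge x).mono (sep_subset _ _)
  obtain ⟨_⟩ := countable_infinite_iff_nonempty_denumerable.1 ⟨hcount, hinf⟩
  obtain ⟨W, hW, rfl⟩ : ∃ W : ℕ → Set X, Function.Injective W ∧ range W = U :=
    ⟨fun n => (Denumerable.eqv U).symm n,
      Subtype.val_injective.comp (Denumerable.eqv U).symm.injective, by
        rw [range_comp' Subtype.val, (Denumerable.eqv U).symm.range_eq_univ, image_univ,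
          Subtype.range_val]⟩
  rw [forall_mem_range] at hclopen
  refine (isLargeSplittable_range_iff hW fun n => (hclopen n).isOpen).2 (h W hclopen fun x => ?_)
  exact (infinite_sep_range_iff hW x).1 (hlarge x)

theorem exists_seq_isClopen_pairwise_disjoint {Z : Type*} [TopologicalSpace Z] [T2Space Z]
    (hZ : TopologicalSpace.IsTopologicalBasis {s : Set Z | IsClopen s}) {g : X → Z}
    (hg : Continuous g) (hinf : (range g).Infinite) :
    ∃ E : ℕ → Set X, (∀ n, IsClopen (E n)) ∧ (∀ n, (E n).Nonempty) ∧
      Pairwise (Function.onFun Disjoint E) := by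
  have := hinf.to_subtype
  obtain ⟨O, hOinf, hOopen, hOdisj⟩ := exists_seq_infinite_isOpen_pairwise_disjoint (range g)
  have hshrink (n : ℕ) : ∃ C : Set Z, IsClopen C ∧ (g ⁻¹' C).Nonempty ∧
      g ⁻¹' C ⊆ rangeFactorization g ⁻¹' O n := by
    obtain ⟨G, hG, hGO⟩ := isOpen_induced_iff.1 (hOopen n)
    obtain ⟨⟨_, x, rfl⟩, hx⟩ := (hOinf n).nonempty
    rw [← hGO] at hx ⊢
    obtain ⟨C, hC, hxC, hCG⟩ := hZ.exists_subset_of_mem_open hx hG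
    exact ⟨C, hC, ⟨x, hxC⟩, fun y hy => hCG hy⟩
  choose C hC hne hCO using hshrink
  exact ⟨fun n => g ⁻¹' C n, fun n => (hC n).preimage hg, hne, fun m n hmn =>
    ((hOdisj hmn).preimage _).mono (hCO m) (hCO n)⟩

theorem exists_injective_eventually_mem_iff {E : ℕ → Set X} (hE : ∀ n, IsClopen (E n))
    (hne : ∀ n, (E n).Nonempty) (hdisj : Pairwise (Function.onFun Disjoint E))
    {U : ℕ → Set X} (hU : ∀ n, IsClopen (U n)) :
    ∃ W : ℕ → Set X, Function.Injective W ∧ (∀ n, IsClopen (W n)) ∧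
      ∀ x, ∀ᶠ n in Filter.cofinite, (x ∈ W n ↔ x ∈ U n) := by
  have hEinj : Function.Injective E := fun m n hmn => hdisj.eq fun hd => by
    rw [Function.onFun, hmn, disjoint_self] at hd
    exact (hne n).ne_empty hd
  have hSinf (n : ℕ) : (range fun k => symmDiff (U n) (E (Nat.pair n k))).Infinite :=
    infinite_range_of_injective fun k l hkl =>
      (Nat.pair_eq_pair.1 (hEinj (symmDiff_right_injective _ hkl))).2
  obtain ⟨W, hW, hWS⟩ := exists_injective_forall_mem hSinf
  choose k hk using hWS
  obtain rfl : (fun n => symmDiff (U n) (E (Nat.pair n (k n)))) = W := funext hk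
  refine ⟨_, hW, fun n => ((hU n).diff (hE _)).union ((hE _).diff (hU n)), fun x => ?_⟩
  have hchanged {n : ℕ} (hn : ¬ (x ∈ symmDiff (U n) (E (Nat.pair n (k n))) ↔ x ∈ U n)) :
      x ∈ E (Nat.pair n (k n)) := by
    by_contra hx
    simp [mem_symmDiff, hx] at hn
  refine Set.Subsingleton.finite fun m hm n hn => ?_
  exact (Nat.pair_eq_pair.1 (hdisj.eq (not_disjoint_iff.2 ⟨x, hchanged hm, hchanged hn⟩))).1

theorem ClopenLargeSplit.clopenSeqSplit (h : ClopenLargeSplit X) : ClopenSeqSplit X := by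
  intro U hU hinf
  let g : X → ℕ → Bool := fun x n => (U n).boolIndicator x
  have hg : Continuous g := continuous_pi_boolIndicator hU
  have hgU (x : X) : {n | g x n = true} = {n | x ∈ U n} :=
    ext fun n => ((U n).mem_iff_boolIndicator x).symm
  by_cases hcount : (range g).Countable
  · have := hcount.to_subtype
    obtain ⟨s, hs⟩ := exists_splits_of_countable (a := fun y : range g => {n | y.1 n = true}) <| by
      rintro ⟨_, x, rfl⟩
      simpa only [hgU] using hinf x
    exact ⟨s, fun x => hgU x ▸ hs ⟨g x, x, rfl⟩⟩
  · obtain ⟨E, hE, hne, hdisj⟩ := exists_seq_isClopen_pairwise_disjoint isTopologicalBasis_isClopen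
      hg fun hfin => hcount hfin.countable
    obtain ⟨W, hW, hWclopen, hWU⟩ := exists_injective_eventually_mem_iff hE hne hdisj hU
    have hWinf (x : X) : {n | x ∈ W n}.Infinite :=
      Filter.frequently_cofinite_iff_infinite.1 <|
        (Filter.frequently_congr (hWU x)).2 (Filter.frequently_cofinite_iff_infinite.2 (hinf x))
    have hsplit : IsLargeSplittable (range W) :=
      h _ (countable_range W) (forall_mem_range.2 hWclopen) fun x =>
        (infinite_sep_range_iff hW x).2 (hWinf x)
    obtain ⟨s, hs⟩ := (isLargeSplittable_range_iff hW fun n => (hWclopen n).isOpen).1 hsplit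
    exact ⟨s, fun x => (hs x).congr (hWU x)⟩

theorem clopenLargeSplit_iff_clopenSeqSplit : ClopenLargeSplit X ↔ ClopenSeqSplit X :=
  ⟨ClopenLargeSplit.clopenSeqSplit, ClopenSeqSplit.clopenLargeSplit⟩

variable (X) in
theorem stmt16_general :
    ClopenLargeSplit X ↔ ∀ f : X → InfiniteSubsets, Continuous f → ¬ IsReaping (range f) :=
  clopenLargeSplit_iff_clopenSeqSplit.trans clopenSeqSplit_iff_forall_not_isReaping

theorem stmt16 (X : Set ℝ) :
    (∀ U : Set (Set ↥X), U.Countable → (∀ u ∈ U, IsClopen u) →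
        (∀ x : ↥X, {u ∈ U | x ∈ u}.Infinite) →
        ∃ V₀ V₁ : Set (Set ↥X), V₀ ∪ V₁ = U ∧ Disjoint V₀ V₁ ∧
          IsLargeCover V₀ ∧ IsLargeCover V₁) ↔
      (∀ f : ↥X → {g : ℕ → Bool // {n : ℕ | g n = true}.Infinite},
        Continuous f →
          ¬ ∀ x : Set ℕ, x.Infinite → ∃ y ∈ range f,
              ({n : ℕ | (y : ℕ → Bool) n = true} \ x).Finite ∨
              ({n : ℕ | (y : ℕ → Bool) n = true} ∩ x).Finite) :=
  stmt16_general X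
end

section
/- For a set X ⊆ ℝ (with the subspace topology) the following are equivalent: (1) X satisfies Ufin(Γ,Γ); (2) for every Gδ subset G of ℝ with X ⊆ G there is an Fσ subset F of ℝ (a countable union of closed sets) such that X ⊆ F ⊆ G. -/
open Set

universe u

variable {X : Type u} [TopologicalSpace X]

/-!
Both conditions are equivalent to the Hurewicz property of `X`: given open covers
`(o n k)ₖ` of `X`, one for each `n`, some `f : ℕ → ℕ` has every point of `X` in
`⋃ k ≤ f n, o n k` for all but finitely many `n`. For `Ufin(Γ,Γ)` this is because the finite unions
`⋃ k ≤ m, o n k`, `m : ℕ`, form a γ-cover as soon as none of them is the whole space.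

If `X ⊆ ⋂ n, O n` with `O n` open and decreasing, write `O n` as a union of open sets
`o n k` whose closures lie in `O n`. The Hurewicz property makes the sets
`⋂ n ≥ m, ⋃ k ≤ f n, closure (o n k)` a sequence of closed sets covering `X` inside `⋂ n, O n`.
Conversely, open covers of `X` cover a `Gδ` set around it, hence also an `Fσ` set in between. That
set is σ-compact, and an increasing sequence of compact sets exhausting it dictates how much of
the `n`-th cover to take.
-/

open Filter

theorem isGammaCover_range {S : ℕ → Set X} (hopen : ∀ n, IsOpen (S n)) (hne : ∀ n, S n ≠ univ)
    (hmem : ∀ x, ∀ᶠ n in atTop, x ∈ S n) : IsGammaCover (range S) := by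
  have finite_notMem (x : X) : {n | x ∉ S n}.Finite := by
    simpa only [← Nat.cofinite_eq_atTop, eventually_cofinite] using hmem x
  refine ⟨countable_range S, fun hfin => ?_, forall_mem_range.2 hopen, fun x => ?_⟩
  · have : Finite (range S) := hfin
    obtain ⟨⟨_, n, rfl⟩, hfiber⟩ := Finite.exists_infinite_fiber (rangeFactorization S)
    refine hne n (eq_univ_of_forall fun x => by_contra fun hx => ?_)
    refine infinite_coe_iff.1 hfiber ((finite_notMem x).subset fun m hm => ?_)
    have hSm : S m = S n := congrArg Subtype.val hm
    exact fun hxm => hx (hSm ▸ hxm)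
  · refine ((finite_notMem x).image S).subset ?_
    rintro _ ⟨⟨n, rfl⟩, hn⟩
    exact mem_image_of_mem S hn

namespace IsGammaCover

theorem sUnion_eq_univ {U : Set (Set X)} (hU : IsGammaCover U) : ⋃₀ U = univ := by
  refine eq_univ_of_forall fun x => ?_
  obtain ⟨u, hu, hxu⟩ := (hU.2.1.sdiff (hU.2.2.2 x)).nonempty
  exact ⟨u, hu, by_contra fun hx => hxu ⟨hu, hx⟩⟩

/-- `S` may repeat members, so eventual membership holds only along a subsequence. -/
theorem exists_strictMono_eventually_mem {S : ℕ → Set X} (hS : IsGammaCover (range S)) :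
    ∃ φ : ℕ → ℕ, StrictMono φ ∧ ∀ x, ∀ᶠ n in atTop, x ∈ S (φ n) := by
  obtain ⟨-, hinf, -, hfin⟩ := hS
  obtain ⟨T, -, hT⟩ := exists_subset_bijOn univ S
  rw [image_univ] at hT
  have hTinf : T.Infinite := fun h => hinf (hT.image_eq ▸ h.image S)
  have hφ : StrictMono (Nat.nth (· ∈ T)) := Nat.nth_strictMono hTinf
  have hinj : Function.Injective fun n => S (Nat.nth (· ∈ T) n) := fun m n h =>
    hφ.injective (hT.injOn (Nat.nth_mem_of_infinite hTinf m) (Nat.nth_mem_of_infinite hTinf n) h)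
  refine ⟨_, hφ, fun x => ?_⟩
  rw [← Nat.cofinite_eq_atTop, eventually_cofinite]
  exact ((hfin x).preimage hinj.injOn).subset fun n hn => ⟨mem_range_self _, hn⟩

end IsGammaCover

/-- The Hurewicz covering property of a subset of a topological space, for countable covers by open
sets of the ambient space. A finite part of the cover `(o n k)ₖ` is encoded by a bound `f n` on the
indices. -/
def IsHurewicz (A : Set X) : Prop :=
  ∀ o : ℕ → ℕ → Set X, (∀ n k, IsOpen (o n k)) → (∀ n, A ⊆ ⋃ k, o n k) →
    ∃ f : ℕ → ℕ, ∀ x ∈ A, ∀ᶠ n in atTop, x ∈ accumulate (o n) (f n)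

theorem isHurewicz_iff_isHurewicz_univ {A : Set X} :
    IsHurewicz A ↔ IsHurewicz (univ : Set A) := by
  constructor
  · intro hA o ho hcov
    choose o' ho' hoo' using fun n k => isOpen_induced_iff.1 (ho n k)
    obtain rfl : (fun n k => Subtype.val ⁻¹' o' n k) = o := funext₂ hoo'
    obtain ⟨f, hf⟩ := hA o' ho' fun n x hx => by simpa using hcov n (mem_univ ⟨x, hx⟩)
    exact ⟨f, fun x _ => (hf x x.2).mono fun n hn => by simpa [mem_accumulate] using hn⟩
  · intro hA o ho hcov
    obtain ⟨f, hf⟩ := hA (fun n k => Subtype.val ⁻¹' o n k)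
      (fun n k => (ho n k).preimage continuous_subtype_val)
      (fun n x _ => by simpa using hcov n x.2)
    exact ⟨f, fun x hx =>
      (hf ⟨x, hx⟩ (mem_univ _)).mono fun n hn => by simpa [mem_accumulate] using hn⟩

theorem exists_sUnion_subset_of_finite_of_subset_range {α : Type*} {W : ℕ → Set α}
    (hW : Monotone W) {V : Set (Set α)} (hV : V.Finite) (hVW : V ⊆ range W) :
    ∃ k, ⋃₀ V ⊆ W k := by
  choose! i hi using hVW
  obtain ⟨k, hk⟩ := (hV.image i).bddAbove
  exact ⟨k, sUnion_subset fun v hv => (hi hv).ge.trans (hW (hk (mem_image_of_mem i hv)))⟩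

/-- Antitonicity in `n` transfers the conclusion from a subsequence to the whole sequence. -/
theorem exists_forall_eventually_mem_of_ufin_of_ne_univ (h : Ufin (X := X) IsGammaCover)
    {W : ℕ → ℕ → Set X} (hopen : ∀ n k, IsOpen (W n k)) (hmono : ∀ n, Monotone (W n))
    (hanti : ∀ k, Antitone fun n => W n k) (hcov : ∀ n, ⋃ k, W n k = univ)
    (hne : ∀ n k, W n k ≠ univ) : ∃ f : ℕ → ℕ, ∀ x, ∀ᶠ n in atTop, x ∈ W n (f n) := by
  have eventually_mem (n : ℕ) (x : X) : ∀ᶠ k in atTop, x ∈ W n k := by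
    obtain ⟨k, hk⟩ := iUnion_eq_univ_iff.1 (hcov n) x
    exact (eventually_ge_atTop k).mono fun l hl => hmono n hl hk
  obtain ⟨V, hV, hVcov⟩ := h (fun n => range (W n)) fun n =>
    isGammaCover_range (hopen n) (hne n) (eventually_mem n)
  choose g hg using fun n =>
    exists_sUnion_subset_of_finite_of_subset_range (hmono n) (hV n).1 (hV n).2
  rcases hVcov with ⟨n, hn⟩ | hγ
  · exact absurd (univ_subset_iff.1 (hn ▸ hg n)) (hne n (g n))
  obtain ⟨φ, hφ, hmem⟩ := hγ.exists_strictMono_eventually_mem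
  exact ⟨fun n => g (φ n), fun x =>
    (hmem x).mono fun n hn => hanti _ (hφ.le_apply (x := n)) (hg (φ n) hn)⟩

theorem exists_forall_eventually_mem_of_ufin (h : Ufin (X := X) IsGammaCover)
    {W : ℕ → ℕ → Set X} (hopen : ∀ n k, IsOpen (W n k)) (hmono : ∀ n, Monotone (W n))
    (hanti : ∀ k, Antitone fun n => W n k) (hcov : ∀ n, ⋃ k, W n k = univ) :
    ∃ f : ℕ → ℕ, ∀ x, ∀ᶠ n in atTop, x ∈ W n (f n) := by
  by_cases huniv : ∀ n, ∃ k, W n k = univ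
  · choose f hf using huniv
    exact ⟨f, fun x => Eventually.of_forall fun n => hf n ▸ mem_univ x⟩
  push Not at huniv
  obtain ⟨N, hN⟩ := huniv
  have hne (n k : ℕ) : W (N + n) k ≠ univ := fun hk =>
    hN k (univ_subset_iff.1 (hk ▸ hanti k (Nat.le_add_right N n)))
  obtain ⟨f, hf⟩ := exists_forall_eventually_mem_of_ufin_of_ne_univ h (W := fun n => W (N + n))
    (fun n => hopen (N + n)) (fun n => hmono (N + n))
    (fun k m n hmn => hanti k (Nat.add_le_add_left hmn N)) (fun n => hcov (N + n)) hne
  exact ⟨f, fun x => (hf x).mono fun n hn => hanti _ (Nat.le_add_left n N) hn⟩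

theorem isHurewicz_univ_of_ufin (h : Ufin (X := X) IsGammaCover) :
    IsHurewicz (univ : Set X) := by
  intro o ho hcov
  let W : ℕ → ℕ → Set X := fun n k => dissipate (fun i => accumulate (o i) k) n
  have hcovW (n : ℕ) : ⋃ k, W n k = univ := by
    refine eq_univ_of_forall fun x => ?_
    choose k hk using fun i => mem_iUnion.1 (hcov i (mem_univ x))
    obtain ⟨K, hK⟩ := ((finite_Iic n).image k).bddAbove
    exact mem_iUnion.2 ⟨K, mem_dissipate.2 fun i hi =>
      mem_accumulate.2 ⟨k i, hK (mem_image_of_mem k hi), hk i⟩⟩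
  obtain ⟨f, hf⟩ := exists_forall_eventually_mem_of_ufin h (W := W)
    (fun n k => (finite_Iic n).isOpen_biInter fun i _ => isOpen_biUnion fun j _ => ho i j)
    (fun n k l hkl => iInter₂_mono fun i _ => monotone_accumulate hkl)
    (fun k => antitone_dissipate) hcovW
  exact ⟨f, fun x _ => (hf x).mono fun n hn => mem_dissipate.1 hn n le_rfl⟩

theorem ufin_of_isHurewicz_univ (h : IsHurewicz (univ : Set X)) :
    Ufin (X := X) IsGammaCover := by
  intro U hU
  choose u hu using fun n => (hU n).1.exists_eq_range (hU n).2.1.nonempty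
  have hopen (n k : ℕ) : IsOpen (u n k) := (hU n).2.2.1 _ (hu n ▸ mem_range_self k)
  obtain ⟨f, hf⟩ := h u hopen fun n => by
    rw [← sUnion_range, ← hu n, (hU n).sUnion_eq_univ]
  have sUnion_eq (n : ℕ) : ⋃₀ (u n '' Iic (f n)) = accumulate (u n) (f n) := sUnion_image _ _
  refine ⟨fun n => u n '' Iic (f n), fun n => ⟨(finite_Iic _).image _, ?_⟩, ?_⟩
  · exact (image_subset_range _ _).trans (hu n).ge
  · simp only [sUnion_eq]
    refine or_iff_not_imp_left.2 fun hne => isGammaCover_range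
      (fun n => isOpen_biUnion fun k _ => hopen n k) (not_exists.1 hne) fun x => hf x (mem_univ x)

theorem ufin_isGammaCover_iff_isHurewicz {A : Set X} :
    Ufin (X := A) IsGammaCover ↔ IsHurewicz A :=
  ⟨fun h => isHurewicz_iff_isHurewicz_univ.2 (isHurewicz_univ_of_ufin h),
    fun h => ufin_of_isHurewicz_univ (isHurewicz_iff_isHurewicz_univ.1 h)⟩

theorem isHurewicz_of_isSigmaCompact {A : Set X} (hA : IsSigmaCompact A) : IsHurewicz A := by
  obtain ⟨K, hK, rfl⟩ := hA
  intro o ho hcov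
  have exists_accumulate (n : ℕ) : ∃ k, accumulate K n ⊆ accumulate (o n) k :=
    (isCompact_accumulate hK n).elim_directed_cover _
      (fun k => isOpen_biUnion fun j _ => ho n j)
      ((accumulate_subset_iUnion n).trans ((hcov n).trans iUnion_accumulate.ge))
      directed_accumulate
  choose f hf using exists_accumulate
  refine ⟨f, fun x hx => ?_⟩
  obtain ⟨m, hm⟩ := mem_iUnion.1 hx
  exact (eventually_ge_atTop m).mono fun n hn => hf n (mem_accumulate.2 ⟨m, hn, hm⟩)

theorem isHurewicz_of_forall_isGδ_exists_isHurewicz {A : Set X}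
    (h : ∀ G, IsGδ G → A ⊆ G → ∃ F, IsHurewicz F ∧ A ⊆ F ∧ F ⊆ G) : IsHurewicz A := by
  intro o ho hcov
  obtain ⟨F, hF, hAF, hFo⟩ := h (⋂ n, ⋃ k, o n k)
    (.iInter_of_isOpen fun n => isOpen_iUnion (ho n)) (subset_iInter hcov)
  obtain ⟨f, hf⟩ := hF o ho fun n => hFo.trans (iInter_subset _ n)
  exact ⟨f, fun x hx => hf x (hAF hx)⟩

/-- An `Fσ` set: a countable union of closed sets. The counterpart of `IsGδ`, indexed by `ℕ`. -/
def IsFσ (s : Set X) : Prop :=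
  ∃ C : ℕ → Set X, (∀ n, IsClosed (C n)) ∧ s = ⋃ n, C n

theorem IsFσ.isSigmaCompact [SigmaCompactSpace X] {s : Set X} (hs : IsFσ s) :
    IsSigmaCompact s := by
  obtain ⟨C, hC, rfl⟩ := hs
  exact isSigmaCompact_iUnion C fun n => isSigmaCompact_univ.of_isClosed_subset (hC n)
    (subset_univ _)

theorem exists_isOpen_iUnion_eq_closure_subset [PerfectlyNormalSpace X] {O : Set X}
    (hO : IsOpen O) :
    ∃ o : ℕ → Set X, (∀ k, IsOpen (o k)) ∧ ⋃ k, o k = O ∧ ∀ k, closure (o k) ⊆ O := by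
  obtain ⟨G, hG, hOG⟩ := hO.isClosed_compl.isGδ.eq_iInter_nat
  have hO_eq : O = ⋃ k, (G k)ᶜ := by rw [← compl_iInter, ← hOG, compl_compl]
  choose o ho hGo hoO using fun k => normal_exists_closure_subset (hG k).isClosed_compl hO
    (hO_eq ▸ subset_iUnion (fun k => (G k)ᶜ) k)
  exact ⟨o, ho, (iUnion_subset fun k => subset_closure.trans (hoO k)).antisymm
    (hO_eq.le.trans (iUnion_mono hGo)), hoO⟩

theorem IsHurewicz.exists_isFσ_between [PerfectlyNormalSpace X] {A G : Set X}
    (hA : IsHurewicz A) (hG : IsGδ G) (hAG : A ⊆ G) : ∃ F, IsFσ F ∧ A ⊆ F ∧ F ⊆ G := by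
  obtain ⟨O, hO, rfl⟩ := hG.eq_iInter_nat
  have hD (n : ℕ) : IsOpen (dissipate O n) := (finite_Iic n).isOpen_biInter fun i _ => hO i
  choose o ho hoU hoD using fun n => exists_isOpen_iUnion_eq_closure_subset (hD n)
  obtain ⟨f, hf⟩ := hA o ho fun n => (hAG.trans (iInter_subset_dissipate n)).trans (hoU n).ge
  refine ⟨⋃ m, ⋂ n ≥ m, ⋃ k ∈ Iic (f n), closure (o n k), ⟨_, fun m => ?_, rfl⟩, ?_, ?_⟩
  · exact isClosed_biInter fun n _ => (finite_Iic _).isClosed_biUnion fun k _ => isClosed_closure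
  · intro x hx
    obtain ⟨m, hm⟩ := eventually_atTop.1 (hf x hx)
    exact mem_iUnion.2 ⟨m, mem_iInter₂.2 fun n hn =>
      iUnion₂_mono (fun k _ => subset_closure) (hm n hn)⟩
  · refine iUnion_subset fun m x hx => mem_iInter.2 fun i => ?_
    have hxD : x ∈ dissipate O (max m i) :=
      iUnion₂_subset (fun k _ => hoD _ k) (mem_iInter₂.1 hx (max m i) (le_max_left m i))
    exact dissipate_subset (le_max_right m i) hxD

theorem stmt18_general [PerfectlyNormalSpace X] [SigmaCompactSpace X] (A : Set X) :
    Ufin (X := A) IsGammaCover ↔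
      ∀ G : Set X, IsGδ G → A ⊆ G → ∃ F : Set X, IsFσ F ∧ A ⊆ F ∧ F ⊆ G := by
  rw [ufin_isGammaCover_iff_isHurewicz]
  refine ⟨fun hA G => hA.exists_isFσ_between, fun h => ?_⟩
  refine isHurewicz_of_forall_isGδ_exists_isHurewicz fun G hG hAG => ?_
  obtain ⟨F, hF, hAF, hFG⟩ := h G hG hAG
  exact ⟨F, isHurewicz_of_isSigmaCompact hF.isSigmaCompact, hAF, hFG⟩

theorem stmt18 (X : Set ℝ) :
    Ufin (X := ↥X) IsGammaCover ↔
      ∀ G : Set ℝ, (∃ O : ℕ → Set ℝ, (∀ n, IsOpen (O n)) ∧ G = ⋂ n, O n) →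
        X ⊆ G →
        ∃ F : Set ℝ, (∃ C : ℕ → Set ℝ, (∀ n, IsClosed (C n)) ∧ F = ⋃ n, C n) ∧
          X ⊆ F ∧ F ⊆ G := by
  simpa only [isGδ_iff_eq_iInter_nat, IsFσ] using stmt18_general X
end

section
/- Every topological space X satisfying S1(Ω,Ω) satisfies Q(Ω,Ω): for every ω-cover U of X and every partition of U into countably many pairwise disjoint nonempty finite sets (F_n)_{n∈ℕ}, there is a subfamily V ⊆ U that is an ω-cover of X and satisfies |V ∩ F_n| ≤ 1 for every n. -/
open Set

universe u

variable {X : Type u} [TopologicalSpace X]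

/-!
Finitely many members of `U` can be avoided by adding to a finite set `G` a point outside each of
them, so `G` is contained in members of `U` coming from infinitely many blocks `F k`. Hence the
intersections `⋂ k ∈ K, c k` with `c k ∈ F k` and `#K = n + 1` form an ω-cover for each `n`.
Applying S1(Ω,Ω) to these covers gives sets of indices `K n` of size `n + 1`, to which Hall's
theorem applies: there are pairwise distinct `g n ∈ K n`. Replacing the `n`-th intersection by its
factor in `F (g n)` only enlarges it, so the factors still form an ω-cover, and they lie in
different blocks.
-/

section Transversal

variable {ι α : Type*}

theorem exists_injective_forall_mem_of_lt_card {K : ℕ → Finset α}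
    (hK : ∀ n, n < (K n).card) : ∃ g : ℕ → α, g.Injective ∧ ∀ n, g n ∈ K n := by
  classical
  refine (Finset.all_card_le_biUnion_card_iff_exists_injective K).1 fun s => ?_
  rcases s.eq_empty_or_nonempty with rfl | hs
  · simp
  calc s.card ≤ (Finset.range (s.max' hs + 1)).card :=
        Finset.card_le_card fun i hi => Finset.mem_range_succ_iff.2 (s.le_max' i hi)
    _ = s.max' hs + 1 := Finset.card_range _
    _ ≤ (K (s.max' hs)).card := hK _
    _ ≤ (s.biUnion K).card :=
        Finset.card_le_card (Finset.subset_biUnion_of_mem K (s.max'_mem hs))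

theorem subsingleton_range_inter_of_pairwise_disjoint {κ : Type*} {F : ι → Set α}
    (hF : Pairwise fun i j => Disjoint (F i) (F j)) {g : κ → ι} (hg : g.Injective) {v : κ → α}
    (hv : ∀ n, v n ∈ F (g n)) (i : ι) : (range v ∩ F i).Subsingleton := by
  have index_eq : ∀ n, v n ∈ F i → g n = i := fun n hn =>
    hF.eq (not_disjoint_iff.2 ⟨v n, hv n, hn⟩)
  rintro _ ⟨⟨m, rfl⟩, hm⟩ _ ⟨⟨n, rfl⟩, hn⟩
  rw [hg ((index_eq m hm).trans (index_eq n hn).symm)]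

end Transversal

namespace IsOmegaCover

variable {ι : Type*} {U V W : Set (Set X)} {F : ι → Set (Set X)} {G : Set X}

theorem of_subset_of_refines (hU : IsOmegaCover U) (hVU : V ⊆ U) (hW : IsOmegaCover W)
    (hWV : ∀ w ∈ W, ∃ v ∈ V, w ⊆ v) : IsOmegaCover V := by
  obtain ⟨hcount, hopen, huniv, -⟩ := hU
  refine ⟨hcount.mono hVU, fun v hv => hopen v (hVU hv), fun h => huniv (hVU h), fun G hG => ?_⟩
  obtain ⟨w, hw, hGw⟩ := hW.2.2.2 G hG
  obtain ⟨v, hv, hwv⟩ := hWV w hw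
  exact ⟨v, hv, hGw.trans hwv⟩

theorem infinite_ofPred_subset (hU : IsOmegaCover U) (hG : G.Finite) :
    {u ∈ U | G ⊆ u}.Infinite := by
  intro hfin
  have : Finite {u ∈ U | G ⊆ u} := hfin.to_subtype
  have exists_notMem : ∀ u : {u ∈ U | G ⊆ u}, ∃ x, x ∉ u.1 := fun u =>
    (ne_univ_iff_exists_notMem u.1).1 fun h => hU.2.2.1 (h ▸ u.2.1)
  choose x hx using exists_notMem
  obtain ⟨u, hu, hGu⟩ := hU.2.2.2 (G ∪ range x) (hG.union (finite_range x))
  obtain ⟨hG_sub, hx_sub⟩ := union_subset_iff.1 hGu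
  exact hx ⟨u, hu, hG_sub⟩ (hx_sub (mem_range_self _))

theorem infinite_ofPred_exists_subset (hU : IsOmegaCover (⋃ k, F k)) (hF : ∀ k, (F k).Finite)
    (hG : G.Finite) : {k | ∃ u ∈ F k, G ⊆ u}.Infinite := by
  intro hfin
  refine hU.infinite_ofPred_subset hG ((hfin.biUnion fun k _ => hF k).subset ?_)
  rintro u ⟨hu, hGu⟩
  obtain ⟨k, hk⟩ := mem_iUnion.1 hu
  exact mem_biUnion (show k ∈ {k | ∃ u ∈ F k, G ⊆ u} from ⟨u, hk, hGu⟩) hk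

end IsOmegaCover

/-- The intersections of partial transversals of size `n` of the blocks `F k`: one set is taken from
each of `n` blocks with distinct indices. The choice function `c` is total, but only its values on
`K` matter. -/
def transversalInters {α ι : Type*} (F : ι → Set (Set α)) (n : ℕ) : Set (Set α) :=
  {w | ∃ (K : Finset ι) (c : ι → Set α), K.card = n ∧ (∀ k ∈ K, c k ∈ F k) ∧ w = ⋂ k ∈ K, c k}

theorem countable_transversalInters {α ι : Type*} {F : ι → Set (Set α)}
    (hF : (⋃ k, F k).Countable) (n : ℕ) : (transversalInters F n).Countable := by
  refine ((countable_ofPred_finite_subset hF).image sInter).mono ?_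
  rintro w ⟨K, c, -, hc, rfl⟩
  refine ⟨c '' K, ⟨K.finite_toSet.image c, ?_⟩, sInter_image c K⟩
  exact image_subset_iff.2 fun k hk => mem_iUnion_of_mem k (hc k hk)

theorem IsOmegaCover.transversalInters {ι : Type*} {F : ι → Set (Set X)}
    (hU : IsOmegaCover (⋃ k, F k)) (hF : ∀ k, (F k).Finite) {n : ℕ} (hn : n ≠ 0) :
    IsOmegaCover (transversalInters F n) := by
  refine ⟨countable_transversalInters hU.1 n, ?_, ?_, fun G hG => ?_⟩
  · rintro w ⟨K, c, -, hc, rfl⟩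
    exact isOpen_biInter_finset fun k hk => hU.2.1 _ (mem_iUnion_of_mem k (hc k hk))
  · rintro ⟨K, c, hK, hc, huniv⟩
    obtain ⟨k, hk⟩ : K.Nonempty := Finset.card_ne_zero.1 (hK ▸ hn)
    have hck : c k = univ := univ_subset_iff.1 (subset_iInter₂_iff.1 huniv.subset k hk)
    exact hU.2.2.1 (hck ▸ mem_iUnion_of_mem k (hc k hk))
  · obtain ⟨K, hKG, hK⟩ := (hU.infinite_ofPred_exists_subset hF hG).exists_subset_card_eq n
    have exists_superset : ∀ k ∈ K, ∃ u ∈ F k, G ⊆ u := fun k hk => hKG hk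
    choose! c hc hGc using exists_superset
    exact ⟨_, ⟨K, c, hK, hc, rfl⟩, subset_iInter₂ hGc⟩

theorem stmt19 {X : Type u} [TopologicalSpace X]
    (h : S1 (X := X) IsOmegaCover IsOmegaCover) :
    ∀ U : Set (Set X), IsOmegaCover U →
      ∀ F : ℕ → Set (Set X), (∀ n, (F n).Finite ∧ (F n).Nonempty) →
        (Pairwise fun m n => Disjoint (F m) (F n)) → (⋃ n, F n) = U →
        ∃ V ⊆ U, IsOmegaCover V ∧ ∀ n, (V ∩ F n).Subsingleton := by
  rintro _ hU F hF hdisj rfl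
  obtain ⟨W, hWF, hW⟩ := h (fun n => transversalInters F (n + 1)) fun n =>
    hU.transversalInters (fun k => (hF k).1) n.succ_ne_zero
  choose K c hK hc hWc using hWF
  obtain ⟨g, hg, hgK⟩ :=
    exists_injective_forall_mem_of_lt_card fun n => (Nat.lt_succ_self n).trans_eq (hK n).symm
  have hcF : ∀ n, c n (g n) ∈ F (g n) := fun n => hc n _ (hgK n)
  have hsub : range (fun n => c n (g n)) ⊆ ⋃ k, F k :=
    range_subset_iff.2 fun n => mem_iUnion_of_mem (g n) (hcF n)
  have hrefines : ∀ w ∈ range W, ∃ v ∈ range (fun n => c n (g n)), w ⊆ v :=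
    forall_mem_range.2 fun n =>
      ⟨_, mem_range_self n, (hWc n).trans_subset (biInter_subset_of_mem (hgK n))⟩
  exact ⟨_, hsub, hU.of_subset_of_refines hsub hW hrefines,
    subsingleton_range_inter_of_pairwise_disjoint hdisj hg hcF⟩
end
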